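/- There exists a constant C > 0 such that for every x in the closed positive Weyl chamber ā₊, | (ρ, x) + (x, ∇F_0(x))/F_0(x) − |R₀⁺| | ≤ C / (1 + min_{α∈R⁺} (α, x)), where |R₀⁺| is the number of positive indivisible roots. -/

import Mathlib

open scoped BigOperators RealInnerProductSpace Classical

noncomputable section

variable {E : Type*} [NormedAddCommGroup E] [InnerProductSpace ℝ E] [FiniteDimensional ℝ E]

/-- The coroot `α∨ = 2α/|α|²`. -/
def coroot (α : E) : E := (2 / ⟪α, α⟫) • α

/-- The orthogonal reflection `r_α x = x - (α∨, x) α`. -/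
def rRefl (α : E) (x : E) : E := x - ⟪coroot α, x⟫ • α

/-- Data of an integral root system with positive subsystem and
a Weyl-invariant positive multiplicity function. -/
structure HOData (E : Type*) [NormedAddCommGroup E] [InnerProductSpace ℝ E] : Type _ where
  R : Finset E
  Rpos : Finset E
  k : E → ℝ
  k_pos : ∀ α ∈ R, 0 < k α
  root_ne_zero : ∀ α ∈ R, α ≠ 0
  pos_subset : Rpos ⊆ R
  pos_char : ∃ u : E, ∀ α ∈ R, (α ∈ Rpos ↔ 0 < ⟪α, u⟫)
  pos_or_neg : ∀ α ∈ R, α ∈ Rpos ∨ -α ∈ Rpos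
  neg_mem : ∀ α ∈ R, -α ∈ R
  integral : ∀ α ∈ R, ∀ β ∈ R, ∃ n : ℤ, ⟪coroot α, β⟫ = (n : ℝ)
  refl_mem : ∀ α ∈ R, ∀ β ∈ R, rRefl α β ∈ R
  k_inv : ∀ α ∈ R, ∀ β ∈ R, k (rRefl α β) = k β

/-- The Weyl group: the subgroup of linear isometries generated by the root reflections. -/
def weylGroup (D : HOData E) : Subgroup (E ≃ₗᵢ[ℝ] E) :=
  Subgroup.closure {w : E ≃ₗᵢ[ℝ] E | ∃ α ∈ D.R, ∀ x, w x = rRefl α x}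

/-- `ρ = (1/2) Σ_{α ∈ R⁺} k_α α`. -/
def rhoHO (D : HOData E) : E := (2:ℝ)⁻¹ • ∑ α ∈ D.Rpos, D.k α • α

/-- Regular points. -/
def HORegular (D : HOData E) (x : E) : Prop := ∀ α ∈ D.R, ⟪α, x⟫ ≠ 0

/-- The (open) positive Weyl chamber. -/
def posChamber (D : HOData E) : Set E := {x | ∀ α ∈ D.Rpos, 0 < ⟪α, x⟫}

/-- The positive indivisible roots `R₀⁺`. -/
def Rpos0 (D : HOData E) : Finset E := D.Rpos.filter (fun α => (2:ℝ)⁻¹ • α ∉ D.R)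

/-- The Opdam function `G_λ` for a real parameter `λ`: an analytic function,
normalized at `0`, satisfying the Cherednik differential-difference system. -/
def IsOpdamR (D : HOData E) (lam : E) (G : E → ℝ) : Prop :=
  AnalyticOnNhd ℝ G Set.univ ∧ G 0 = 1 ∧
  ∀ ξ x, HORegular D x →
    fderiv ℝ G x ξ =
      (∑ α ∈ D.Rpos, D.k α * ⟪α, ξ⟫ / (1 - Real.exp (-⟪α, x⟫)) * (G (rRefl α x) - G x))
      + ⟪rhoHO D + lam, ξ⟫ * G x

/-- The Opdam function `G_λ` for a complex parameter `λ = l1 + i l2 ∈ h`. -/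
def IsOpdamC (D : HOData E) (l1 l2 : E) (G : E → ℂ) : Prop :=
  AnalyticOnNhd ℝ G Set.univ ∧ G 0 = 1 ∧
  ∀ ξ x, HORegular D x →
    fderiv ℝ G x ξ =
      (∑ α ∈ D.Rpos, ((D.k α * ⟪α, ξ⟫ / (1 - Real.exp (-⟪α, x⟫)) : ℝ) : ℂ)
          * (G (rRefl α x) - G x))
      + (((⟪rhoHO D + l1, ξ⟫ : ℝ) : ℂ) + Complex.I * ((⟪l2, ξ⟫ : ℝ) : ℂ)) * G x

/-- The symmetrization `F(x) = |W|⁻¹ Σ_{w ∈ W} G(w x)` (real valued case). -/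
def Fsym (D : HOData E) [Fintype (weylGroup D)] (G : E → ℝ) (x : E) : ℝ :=
  (Fintype.card (weylGroup D) : ℝ)⁻¹ * ∑ w : weylGroup D, G (w.1 x)

/-- The symmetrization `F(x) = |W|⁻¹ Σ_{w ∈ W} G(w x)` (complex valued case). -/
def FsymC (D : HOData E) [Fintype (weylGroup D)] (G : E → ℂ) (x : E) : ℂ :=
  (Fintype.card (weylGroup D) : ℂ)⁻¹ * ∑ w : weylGroup D, G (w.1 x)

/-- `max_{w ∈ W} (w λ, x)`. -/
def maxW (D : HOData E) [Fintype (weylGroup D)] (lam x : E) : ℝ :=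
  ⨆ w : weylGroup D, ⟪w.1 lam, x⟫

set_option linter.unusedSectionVars false

/-! ### Reflections and positive roots -/

lemma inner_rRefl (α β z : E) : ⟪β, rRefl α z⟫ = ⟪rRefl α β, z⟫ := by
  simp only [rRefl, coroot, inner_sub_right, inner_sub_left, inner_smul_left, inner_smul_right]
  simp only [RCLike.conj_to_real, real_inner_comm β α]
  ring

lemma rRefl_smul (α z : E) (c : ℝ) : rRefl α (c • z) = c • rRefl α z := by
  simp only [rRefl, inner_smul_right, smul_sub, smul_smul]

lemma rRefl_neg (α z : E) : rRefl α (-z) = -rRefl α z := by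
  simpa using rRefl_smul α z (-1)

lemma inner_coroot_self {α : E} (hα : α ≠ 0) : ⟪coroot α, α⟫ = 2 := by
  have : ⟪α, α⟫ ≠ 0 := inner_self_ne_zero.mpr hα
  simp only [coroot, inner_smul_left, RCLike.conj_to_real]
  field_simp

lemma rRefl_self {α : E} (hα : α ≠ 0) : rRefl α α = -α := by
  rw [rRefl, inner_coroot_self hα, two_smul]
  abel

lemma rRefl_rRefl {α : E} (hα : α ≠ 0) (z : E) : rRefl α (rRefl α z) = z := by
  have h : ⟪coroot α, rRefl α z⟫ = -⟪coroot α, z⟫ := by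
    rw [rRefl, inner_sub_right, inner_smul_right, inner_coroot_self hα]
    ring
  rw [rRefl, h, rRefl]
  module

lemma rRefl_smul_left {c : ℝ} (hc : c ≠ 0) (α z : E) : rRefl (c • α) z = rRefl α z := by
  by_cases hα : α = 0
  · simp [hα]
  have h : ⟪α, α⟫ ≠ 0 := inner_self_ne_zero.mpr hα
  simp only [rRefl, coroot, inner_smul_left, inner_smul_right, RCLike.conj_to_real, smul_smul]
  congr 2
  field_simp

namespace HOData

variable (D : HOData E)

lemma exists_height : ∃ u : E, (∀ α ∈ D.Rpos, 0 < ⟪α, u⟫) ∧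
    ∀ α ∈ D.R, 0 < ⟪α, u⟫ → α ∈ D.Rpos := by
  obtain ⟨u, hu⟩ := D.pos_char
  exact ⟨u, fun α h => (hu α (D.pos_subset h)).1 h, fun α h h' => (hu α h).2 h'⟩

lemma neg_notMem_pos {α : E} (h : α ∈ D.Rpos) : -α ∉ D.Rpos := by
  obtain ⟨u, hu, -⟩ := D.exists_height
  intro h'
  have h₁ := hu _ h
  have h₂ := hu _ h'
  rw [inner_neg_left] at h₂
  linarith

lemma neg_mem_pos {α : E} (h : α ∈ D.R) (h' : α ∉ D.Rpos) : -α ∈ D.Rpos :=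
  (D.pos_or_neg α h).resolve_left h'

lemma ne_zero_of_pos {α : E} (h : α ∈ D.Rpos) : α ≠ 0 := D.root_ne_zero α (D.pos_subset h)

lemma k_neg {α : E} (h : α ∈ D.R) : D.k (-α) = D.k α := by
  rw [← rRefl_self (D.root_ne_zero α h), D.k_inv α h α h]

lemma sum_even (f : E → ℝ) (hf : ∀ α ∈ D.R, f (-α) = f α) :
    ∑ α ∈ D.R, f α = 2 * ∑ α ∈ D.Rpos, f α := by
  rw [← Finset.sum_sdiff D.pos_subset, two_mul]
  congr 1
  refine Finset.sum_nbij' (fun α => -α) (fun α => -α) ?_ ?_ ?_ ?_ ?_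
  · intro α h
    rw [Finset.mem_sdiff] at h
    exact D.neg_mem_pos h.1 h.2
  · intro α h
    exact Finset.mem_sdiff.2 ⟨D.neg_mem _ (D.pos_subset h), D.neg_notMem_pos h⟩
  · simp
  · simp
  · intro α h
    exact (hf α (Finset.mem_sdiff.1 h).1).symm

lemma sum_rRefl {α : E} (hα : α ∈ D.R) (f : E → ℝ) :
    ∑ γ ∈ D.R, f (rRefl α γ) = ∑ γ ∈ D.R, f γ :=
  Finset.sum_nbij' (rRefl α) (rRefl α) (fun γ h => D.refl_mem α hα γ h)
    (fun γ h => D.refl_mem α hα γ h) (fun γ _ => rRefl_rRefl (D.root_ne_zero α hα) γ)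
    (fun γ _ => rRefl_rRefl (D.root_ne_zero α hα) γ) (fun _ _ => rfl)

lemma regular_rRefl {α z : E} (hα : α ∈ D.R) (hz : HORegular D z) :
    HORegular D (rRefl α z) := by
  intro γ hγ
  rw [inner_rRefl]
  exact hz _ (D.refl_mem α hα γ hγ)

lemma regular_smul {z : E} {t : ℝ} (ht : t ≠ 0) (hz : HORegular D z) :
    HORegular D (t • z) := by
  intro γ hγ
  rw [inner_smul_right]
  exact mul_ne_zero ht (hz γ hγ)

lemma mem_Rpos0 {β : E} : β ∈ Rpos0 D ↔ β ∈ D.Rpos ∧ (2 : ℝ)⁻¹ • β ∉ D.R := by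
  simp [Rpos0]

lemma pos_of_mem_Rpos0 {β : E} (h : β ∈ Rpos0 D) : β ∈ D.Rpos := (D.mem_Rpos0.1 h).1

/-- A positive multiple of a positive root that is a root is a positive root. -/
lemma smul_mem_pos {α : E} {c : ℝ} (hc : 0 < c) (h : α ∈ D.Rpos) (h' : c • α ∈ D.R) :
    c • α ∈ D.Rpos := by
  obtain ⟨u, hu, hu'⟩ := D.exists_height
  refine hu' _ h' ?_
  rw [inner_smul_left]
  exact mul_pos hc (hu α h)

/-- Every positive root is an indivisible positive root or twice one. -/
lemma exists_indivisible {α : E} (h : α ∈ D.Rpos) :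
    ∃ β ∈ Rpos0 D, β = α ∨ (2 : ℝ) • β = α := by
  by_cases h2 : (2 : ℝ)⁻¹ • α ∈ D.R
  · refine ⟨(2 : ℝ)⁻¹ • α, ?_, Or.inr (by rw [smul_smul]; norm_num)⟩
    refine D.mem_Rpos0.2 ⟨D.smul_mem_pos (by norm_num) h h2, fun h4 => ?_⟩
    obtain ⟨n, hn⟩ := D.integral α (D.pos_subset h) _ h4
    rw [inner_smul_right, inner_smul_right, inner_coroot_self (D.ne_zero_of_pos h)] at hn
    have h1 : (1 : ℝ) = ((2 * n : ℤ) : ℝ) := by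
      push_cast
      linarith
    have h1' : (1 : ℤ) = 2 * n := by exact_mod_cast h1
    omega
  · exact ⟨α, D.mem_Rpos0.2 ⟨h, h2⟩, Or.inl rfl⟩

/-- Proportional indivisible positive roots coincide. -/
lemma eq_of_proportional {α β : E} (hα : α ∈ Rpos0 D) (hβ : β ∈ Rpos0 D) {c : ℝ}
    (h : β = c • α) : β = α := by
  obtain ⟨hα1, hα2⟩ := D.mem_Rpos0.1 hα
  obtain ⟨hβ1, hβ2⟩ := D.mem_Rpos0.1 hβ
  obtain ⟨u, hu, -⟩ := D.exists_height
  have hc : 0 < c := by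
    have h1 := hu β hβ1
    rw [h, inner_smul_left] at h1
    exact pos_of_mul_pos_left h1 (hu α hα1).le
  obtain ⟨n, hn⟩ := D.integral α (D.pos_subset hα1) β (D.pos_subset hβ1)
  obtain ⟨n', hn'⟩ := D.integral β (D.pos_subset hβ1) α (D.pos_subset hα1)
  have h' : α = c⁻¹ • β := by rw [h, smul_smul, inv_mul_cancel₀ hc.ne', one_smul]
  rw [h, inner_smul_right, inner_coroot_self (D.ne_zero_of_pos hα1)] at hn
  rw [h', inner_smul_right, inner_coroot_self (D.ne_zero_of_pos hβ1)] at hn'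
  have hnn : ((n * n' : ℤ) : ℝ) = 4 := by
    push_cast
    rw [← hn, ← hn']
    field_simp
    norm_num
  have hnn' : n * n' = 4 := by exact_mod_cast hnn
  have hn0 : (0 : ℝ) < n := by rw [← hn]; positivity
  have hn0' : 0 < n := by exact_mod_cast hn0
  have hdvd : n ∣ 4 := ⟨n', hnn'.symm⟩
  have hle : n ≤ 4 := Int.le_of_dvd (by norm_num) hdvd
  interval_cases n
  · exfalso
    apply hα2
    have : c = 2⁻¹ := by norm_num at hn; linarith
    rw [← this, ← h]
    exact D.pos_subset hβ1
  · have : c = 1 := by norm_num at hn; linarith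
    rw [h, this, one_smul]
  · omega
  · exfalso
    apply hβ2
    have : c = 2 := by norm_num at hn; linarith
    rw [h, this, smul_smul]
    norm_num
    exact D.pos_subset hα1

/-- If two non-proportional roots have positive inner product, their difference is a root. -/
lemma sub_mem {α β : E} (hα : α ∈ D.R) (hβ : β ∈ D.R) (hpos : 0 < ⟪α, β⟫)
    (hprop : ∀ c : ℝ, β ≠ c • α) : β - α ∈ D.R := by
  obtain ⟨n, hn⟩ := D.integral α hα β hβ
  obtain ⟨n', hn'⟩ := D.integral β hβ α hα
  have hα0 := D.root_ne_zero α hα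
  have hβ0 := D.root_ne_zero β hβ
  have ha : 0 < ⟪α, α⟫ := real_inner_self_pos.2 hα0
  have hb : 0 < ⟪β, β⟫ := real_inner_self_pos.2 hβ0
  have e1 : ⟪coroot α, β⟫ = 2 * ⟪α, β⟫ / ⟪α, α⟫ := by
    simp only [coroot, inner_smul_left, RCLike.conj_to_real]; ring
  have e2 : ⟪coroot β, α⟫ = 2 * ⟪α, β⟫ / ⟪β, β⟫ := by
    simp only [coroot, inner_smul_left, RCLike.conj_to_real, real_inner_comm β α]; ring
  have hn0 : (0 : ℝ) < n := by rw [← hn, e1]; positivity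
  have hn0' : (0 : ℝ) < n' := by rw [← hn', e2]; positivity
  have hcs : ⟪α, β⟫ * ⟪α, β⟫ < ⟪α, α⟫ * ⟪β, β⟫ := by
    have hlt : ⟪α, β⟫ < ‖α‖ * ‖β‖ := by
      refine lt_of_le_of_ne (real_inner_le_norm α β) fun h => ?_
      rw [inner_eq_norm_mul_iff_real] at h
      refine hprop (‖α‖⁻¹ * ‖β‖) ?_
      rw [mul_smul, h, smul_smul, inv_mul_cancel₀ (norm_ne_zero_iff.2 hα0), one_smul]
    rw [real_inner_self_eq_norm_mul_norm, real_inner_self_eq_norm_mul_norm]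
    nlinarith [norm_nonneg α, norm_nonneg β]
  have hlt : ((n * n' : ℤ) : ℝ) < 4 := by
    push_cast
    rw [← hn, ← hn', e1, e2, div_mul_div_comm, div_lt_iff₀ (by positivity)]
    nlinarith
  have hlt' : n * n' < 4 := by exact_mod_cast hlt
  have h0 : 0 < n := by exact_mod_cast hn0
  have h0' : 0 < n' := by exact_mod_cast hn0'
  have : n = 1 ∨ n' = 1 := by
    by_contra! hne
    have h2 : 2 ≤ n := by omega
    have h2' : 2 ≤ n' := by omega
    nlinarith
  rcases this with rfl | rfl
  · have := D.refl_mem α hα β hβ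
    rw [rRefl, hn] at this
    simpa using this
  · have := D.refl_mem β hβ α hα
    rw [rRefl, hn'] at this
    have := D.neg_mem _ this
    simpa using this

/-- A positive root that is not the sum of two positive roots. -/
def Indecomposable (α : E) : Prop :=
  α ∈ D.Rpos ∧ ∀ β ∈ D.Rpos, ∀ δ ∈ D.Rpos, β + δ ≠ α

lemma Indecomposable.mem_Rpos0 {D : HOData E} {α : E} (h : D.Indecomposable α) :
    α ∈ Rpos0 D := by
  refine D.mem_Rpos0.2 ⟨h.1, fun h2 => ?_⟩
  have := D.smul_mem_pos (by norm_num) h.1 h2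
  refine h.2 _ this _ this ?_
  rw [← two_smul ℝ, smul_smul]
  norm_num

lemma Indecomposable.add_ne_smul {D : HOData E} {α : E} (h : D.Indecomposable α) (n : ℕ) :
    ∀ β ∈ D.Rpos, ∀ δ ∈ D.Rpos, (∀ c : ℝ, β ≠ c • α) → β + δ ≠ (n : ℝ) • α := by
  obtain ⟨u, hu, -⟩ := D.exists_height
  induction n with
  | zero =>
    intro β hβ δ hδ _ he
    have h1 := congrArg (fun v => ⟪v, u⟫) he
    simp only [inner_add_left, Nat.cast_zero, zero_smul, inner_zero_left] at h1
    linarith [hu β hβ, hu δ hδ]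
  | succ n ih =>
    have key : ∀ β ∈ D.Rpos, ∀ δ ∈ D.Rpos, (∀ c : ℝ, β ≠ c • α) → 0 < ⟪α, β⟫ →
        β + δ ≠ ((n + 1 : ℕ) : ℝ) • α := by
      intro β hβ δ hδ hprop hpos he
      have hsub := D.sub_mem (D.pos_subset h.1) (D.pos_subset hβ) hpos hprop
      by_cases hp : β - α ∈ D.Rpos
      · refine ih (β - α) hp δ hδ (fun c hc => hprop (c + 1) ?_) ?_
        · rw [add_smul, one_smul, ← hc]; abel
        · have : β - α + δ = (β + δ) - α := by abel
          rw [this, he]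
          push_cast
          module
      · have := D.neg_mem_pos hsub hp
        refine h.2 β hβ _ this ?_
        abel
    intro β hβ δ hδ hprop he
    have hsum : 0 < ⟪α, β⟫ + ⟪α, δ⟫ := by
      rw [← inner_add_right, he, inner_smul_right]
      have := real_inner_self_pos.2 (D.ne_zero_of_pos h.1)
      positivity
    rcases lt_or_ge 0 ⟪α, β⟫ with hb | hb
    · exact key β hβ δ hδ hprop hb he
    · refine key δ hδ β hβ (fun c hc => hprop ((n + 1 : ℕ) - c) ?_) (by linarith)
        (by rw [add_comm]; exact he)
      rw [sub_smul, ← hc, ← he]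
      abel

/-- The reflection in an indecomposable root permutes the other indivisible positive roots. -/
lemma Indecomposable.rRefl_mem_pos {D : HOData E} {α β : E} (h : D.Indecomposable α)
    (hβ : β ∈ Rpos0 D) (hne : β ≠ α) : rRefl α β ∈ D.Rpos := by
  by_contra hc
  have hβ1 := D.pos_of_mem_Rpos0 hβ
  have hαR := D.pos_subset h.1
  have hδ := D.neg_mem_pos (D.refl_mem α hαR β (D.pos_subset hβ1)) hc
  obtain ⟨n, hn⟩ := D.integral α hαR β (D.pos_subset hβ1)
  have he : β + -rRefl α β = (n : ℝ) • α := by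
    rw [rRefl, hn]; abel
  have hn0 : 0 ≤ n := by
    obtain ⟨u, hu, -⟩ := D.exists_height
    have h1 := congrArg (fun v => ⟪v, u⟫) he
    simp only [inner_add_left, inner_smul_left, RCLike.conj_to_real] at h1
    have h2 : (0 : ℝ) < n := by
      refine pos_of_mul_pos_left (b := ⟪α, u⟫) ?_ (hu α h.1).le
      rw [← h1]
      exact add_pos (hu β hβ1) (hu _ hδ)
    exact_mod_cast h2.le
  lift n to ℕ using hn0
  exact h.add_ne_smul n β hβ1 _ hδ
    (fun c hc => hne (D.eq_of_proportional h.mem_Rpos0 hβ hc)) (by simpa using he)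

/-- If some positive root is positive at `z`, then an indecomposable one is, and its value
dominates all others up to a constant. -/
lemma exists_indecomposable_dominant :
    ∃ c : ℝ, 0 < c ∧ c ≤ 1 ∧ ∀ z : E, (∃ β ∈ D.Rpos, 0 < ⟪β, z⟫) →
      ∃ α, D.Indecomposable α ∧ 0 < ⟪α, z⟫ ∧ ∀ β ∈ D.Rpos, c * ⟪β, z⟫ ≤ ⟪α, z⟫ := by
  obtain ⟨u, hu, -⟩ := D.exists_height
  rcases D.Rpos.eq_empty_or_nonempty with hemp | hne
  · exact ⟨1, one_pos, le_rfl, fun z ⟨β, hβ, _⟩ => by simp [hemp] at hβ⟩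
  obtain ⟨a, ha, hamin⟩ := D.Rpos.exists_min_image (fun β => ⟪β, u⟫) hne
  obtain ⟨b, hb, hbmax⟩ := D.Rpos.exists_max_image (fun β => ⟪β, u⟫) hne
  have ha0 := hu a ha
  have hb0 := hu b hb
  refine ⟨⟪a, u⟫ / ⟪b, u⟫, div_pos ha0 hb0, (div_le_one hb0).2 (hamin b hb), ?_⟩
  rintro z ⟨β₀, hβ₀, hβ₀z⟩
  obtain ⟨μ, hμ, hμmax⟩ := D.Rpos.exists_max_image (fun β => ⟪β, z⟫ / ⟪β, u⟫) hne
  have hS : (D.Rpos.filter (fun β => ⟪μ, z⟫ / ⟪μ, u⟫ ≤ ⟪β, z⟫ / ⟪β, u⟫)).Nonempty :=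
    ⟨μ, Finset.mem_filter.2 ⟨hμ, le_rfl⟩⟩
  obtain ⟨α, hα, hαmin⟩ := Finset.exists_min_image _ (fun β => ⟪β, u⟫) hS
  rw [Finset.mem_filter] at hα
  set q := ⟪μ, z⟫ / ⟪μ, u⟫ with hq
  have hq0 : 0 < q := lt_of_lt_of_le (div_pos hβ₀z (hu _ hβ₀)) (hμmax β₀ hβ₀)
  have hle : ∀ β ∈ D.Rpos, ⟪β, z⟫ ≤ q * ⟪β, u⟫ := fun β hβ =>
    (div_le_iff₀ (hu β hβ)).1 (hμmax β hβ)
  have hαz : q * ⟪α, u⟫ ≤ ⟪α, z⟫ := (le_div_iff₀ (hu α hα.1)).1 hα.2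
  refine ⟨α, ⟨hα.1, fun β hβ δ hδ he => ?_⟩,
    lt_of_lt_of_le (mul_pos hq0 (hu α hα.1)) hαz, fun β hβ => ?_⟩
  · have e1 : ⟪β, z⟫ + ⟪δ, z⟫ = ⟪α, z⟫ := by rw [← inner_add_left, he]
    have e2 : ⟪β, u⟫ + ⟪δ, u⟫ = ⟪α, u⟫ := by rw [← inner_add_left, he]
    have h3 : q ≤ ⟪β, z⟫ / ⟪β, u⟫ := by
      rw [le_div_iff₀ (hu β hβ)]
      nlinarith [hle δ hδ]
    have := hαmin β (Finset.mem_filter.2 ⟨hβ, h3⟩)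
    linarith [hu δ hδ]
  · have h1 : ⟪a, u⟫ / ⟪b, u⟫ * ⟪β, z⟫ ≤ ⟪a, u⟫ / ⟪b, u⟫ * (q * ⟪b, u⟫) := by
      refine mul_le_mul_of_nonneg_left ((hle β hβ).trans ?_) (div_pos ha0 hb0).le
      exact mul_le_mul_of_nonneg_left (hbmax β hβ) hq0.le
    have h2 : ⟪a, u⟫ / ⟪b, u⟫ * (q * ⟪b, u⟫) = q * ⟪a, u⟫ := by field_simp
    nlinarith [hamin α hα.1]

end HOData

/-! ### The function `s ↦ s / (eˢ - 1)` -/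

/-- The function `s ↦ s / (eˢ - 1)`. -/
def bernoulliKernel (s : ℝ) : ℝ := s / (Real.exp s - 1)

lemma bernoulliKernel_pos {s : ℝ} (hs : 0 < s) : 0 < bernoulliKernel s :=
  div_pos hs (by linarith [Real.add_one_lt_exp hs.ne'])

lemma bernoulliKernel_le_one {s : ℝ} (hs : 0 < s) : bernoulliKernel s ≤ 1 := by
  have := Real.add_one_lt_exp hs.ne'
  exact (div_le_one (by linarith)).2 (by linarith)

lemma bernoulliKernel_mul_exp_le {s : ℝ} (hs : 0 < s) :
    bernoulliKernel s * Real.exp s ≤ 1 + s := by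
  have := Real.add_one_lt_exp hs.ne'
  rw [bernoulliKernel, div_mul_eq_mul_div, div_le_iff₀ (by linarith)]
  nlinarith

lemma exists_bernoulliKernel_mul_pow_le (j : ℕ) :
    ∃ C : ℝ, 0 < C ∧ ∀ s : ℝ, 0 < s → bernoulliKernel s * (1 + s) ^ j ≤ C := by
  refine ⟨(j + 1).factorial * Real.exp 1, by positivity, fun s hs => ?_⟩
  have h1 := bernoulliKernel_mul_exp_le hs
  have h2 := Real.pow_div_factorial_le_exp (1 + s) (by positivity) (j + 1)
  rw [div_le_iff₀ (by positivity), Real.exp_add] at h2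
  have h3 : bernoulliKernel s * (1 + s) ^ j * Real.exp s
      ≤ (j + 1).factorial * Real.exp 1 * Real.exp s :=
    calc bernoulliKernel s * (1 + s) ^ j * Real.exp s
        = bernoulliKernel s * Real.exp s * (1 + s) ^ j := by ring
      _ ≤ (1 + s) * (1 + s) ^ j := mul_le_mul_of_nonneg_right h1 (by positivity)
      _ = (1 + s) ^ (j + 1) := by ring
      _ ≤ _ := h2
      _ = _ := by ring
  exact le_of_mul_le_mul_right h3 (Real.exp_pos s)

lemma div_one_sub_exp_neg {s : ℝ} (hs : s ≠ 0) :
    s / (1 - Real.exp (-s)) = max s 0 + bernoulliKernel |s| := by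
  rcases hs.lt_or_gt with h | h
  · rw [max_eq_right h.le, abs_of_neg h, bernoulliKernel, zero_add,
      ← neg_div_neg_eq s, neg_sub]
  · have h1 := Real.add_one_lt_exp h.ne'
    have h2 : Real.exp s - 1 ≠ 0 := by linarith
    have h3 : 1 - (Real.exp s)⁻¹ ≠ 0 := by
      intro h3
      field_simp at h3
      exact h2 (by simpa using h3)
    rw [max_eq_left h.le, abs_of_pos h, bernoulliKernel, Real.exp_neg]
    have := Real.exp_pos s
    field_simp
    ring

namespace HOData

variable (D : HOData E)

/-! ### The reference product -/

/-- The product of `1 + A (β, z)⁺` over the positive indivisible roots. -/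
def theta (A : ℝ) (z : E) : ℝ := ∏ β ∈ Rpos0 D, (1 + A * max ⟪β, z⟫ 0)

/-- The number of positive indivisible roots that are positive at `z`. -/
def posCount (z : E) : ℕ := ∑ β ∈ Rpos0 D, if 0 < ⟪β, z⟫ then 1 else 0

/-- All roots have absolute value at least `m` at `z`. -/
def Separated (m : ℝ) (z : E) : Prop := ∀ γ ∈ D.R, m ≤ |⟪γ, z⟫|

/-- The reflection in `α`, with values moved to positive roots by a sign. -/
def foldRefl (α β : E) : E := if rRefl α β ∈ D.Rpos then rRefl α β else -rRefl α β

lemma foldRefl_mem {α β : E} (hα : α ∈ D.R) (hβ : β ∈ Rpos0 D) :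
    D.foldRefl α β ∈ Rpos0 D := by
  obtain ⟨hβ1, hβ2⟩ := D.mem_Rpos0.1 hβ
  have hR := D.refl_mem α hα β (D.pos_subset hβ1)
  have hhalf : (2 : ℝ)⁻¹ • rRefl α β ∉ D.R := fun h => hβ2 <| by
    have := D.refl_mem α hα _ h
    rwa [rRefl_smul, rRefl_rRefl (D.root_ne_zero α hα)] at this
  rw [foldRefl]
  split_ifs with h
  · exact D.mem_Rpos0.2 ⟨h, hhalf⟩
  · refine D.mem_Rpos0.2 ⟨D.neg_mem_pos hR h, fun h' => hhalf ?_⟩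
    simpa using D.neg_mem _ h'

lemma rRefl_foldRefl {α : E} (hα : α ∈ D.R) (β : E) :
    rRefl α (D.foldRefl α β) = if rRefl α β ∈ D.Rpos then β else -β := by
  rw [foldRefl]
  split_ifs
  · exact rRefl_rRefl (D.root_ne_zero α hα) β
  · rw [rRefl_neg, rRefl_rRefl (D.root_ne_zero α hα)]

lemma rRefl_foldRefl_mem_iff {α β : E} (hα : α ∈ D.R) (hβ : β ∈ Rpos0 D) :
    rRefl α (D.foldRefl α β) ∈ D.Rpos ↔ rRefl α β ∈ D.Rpos := by
  have hβ1 := D.pos_of_mem_Rpos0 hβ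
  rw [D.rRefl_foldRefl hα]
  split_ifs with h
  · simp [h, hβ1]
  · simp [h, D.neg_notMem_pos hβ1]

lemma foldRefl_foldRefl {α β : E} (hα : α ∈ D.R) (hβ : β ∈ Rpos0 D) :
    D.foldRefl α (D.foldRefl α β) = β := by
  have h := D.rRefl_foldRefl_mem_iff hα hβ
  rw [foldRefl, D.rRefl_foldRefl hα]
  by_cases h' : rRefl α β ∈ D.Rpos
  · simp [h', D.pos_of_mem_Rpos0 hβ]
  · simp [h', D.neg_notMem_pos (D.pos_of_mem_Rpos0 hβ)]

lemma prod_foldRefl {M : Type*} [CommMonoid M] {α : E} (hα : α ∈ D.R) (f : E → M) :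
    ∏ β ∈ Rpos0 D, f (D.foldRefl α β) = ∏ β ∈ Rpos0 D, f β :=
  Finset.prod_nbij' (D.foldRefl α) (D.foldRefl α) (fun _ h => D.foldRefl_mem hα h)
    (fun _ h => D.foldRefl_mem hα h) (fun _ h => D.foldRefl_foldRefl hα h)
    (fun _ h => D.foldRefl_foldRefl hα h) (fun _ _ => rfl)

lemma sum_foldRefl {α : E} (hα : α ∈ D.R) (f : E → ℕ) :
    ∑ β ∈ Rpos0 D, f (D.foldRefl α β) = ∑ β ∈ Rpos0 D, f β :=
  Finset.sum_nbij' (D.foldRefl α) (D.foldRefl α) (fun _ h => D.foldRefl_mem hα h)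
    (fun _ h => D.foldRefl_mem hα h) (fun _ h => D.foldRefl_foldRefl hα h)
    (fun _ h => D.foldRefl_foldRefl hα h) (fun _ _ => rfl)

/-- The value of `β` at `z`, negated if the reflection in `α` makes `β` negative. -/
def flipVal (α z β : E) : ℝ := if rRefl α β ∈ D.Rpos then ⟪β, z⟫ else -⟪β, z⟫

lemma inner_foldRefl_rRefl {α : E} (hα : α ∈ D.R) (β z : E) :
    ⟪D.foldRefl α β, rRefl α z⟫ = D.flipVal α z β := by
  rw [inner_rRefl, D.rRefl_foldRefl hα, flipVal]
  split_ifs <;> simp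

lemma theta_rRefl {α : E} (hα : α ∈ D.R) (A : ℝ) (z : E) :
    D.theta A (rRefl α z) = ∏ β ∈ Rpos0 D, (1 + A * max (D.flipVal α z β) 0) := by
  rw [theta, ← D.prod_foldRefl hα]
  exact Finset.prod_congr rfl fun β _ => by rw [D.inner_foldRefl_rRefl hα]

lemma posCount_rRefl {α : E} (hα : α ∈ D.R) (z : E) :
    D.posCount (rRefl α z) = ∑ β ∈ Rpos0 D, if 0 < D.flipVal α z β then 1 else 0 := by
  rw [posCount, ← D.sum_foldRefl hα]
  exact Finset.sum_congr rfl fun β _ => by rw [D.inner_foldRefl_rRefl hα]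

lemma flipVal_foldRefl_of_mem {α β : E} (hα : α ∈ D.R) (hβ : β ∈ Rpos0 D)
    (h : rRefl α β ∈ D.Rpos) (z : E) :
    D.flipVal α z (D.foldRefl α β) = ⟪D.foldRefl α β, z⟫ := by
  rw [flipVal, if_pos ((D.rRefl_foldRefl_mem_iff hα hβ).2 h)]

lemma flipVal_foldRefl_of_notMem {α β : E} (hα : α ∈ D.R) (hβ : β ∈ Rpos0 D)
    (h : rRefl α β ∉ D.Rpos) (z : E) :
    D.flipVal α z (D.foldRefl α β) = -⟪D.foldRefl α β, z⟫ := by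
  rw [flipVal, if_neg fun h' => h ((D.rRefl_foldRefl_mem_iff hα hβ).1 h')]

lemma inner_add_inner_foldRefl_pos {α β z : E} (hα : α ∈ D.Rpos) (hz : 0 < ⟪α, z⟫)
    (hβ : β ∈ Rpos0 D) (h : rRefl α β ∉ D.Rpos) :
    0 < ⟪β, z⟫ + ⟪D.foldRefl α β, z⟫ := by
  obtain ⟨u, hu, -⟩ := D.exists_height
  have hδ := D.neg_mem_pos
    (D.refl_mem α (D.pos_subset hα) β (D.pos_subset (D.pos_of_mem_Rpos0 hβ))) h
  have e : ∀ v : E, ⟪β, v⟫ + ⟪-rRefl α β, v⟫ = ⟪coroot α, β⟫ * ⟪α, v⟫ := by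
    intro v
    rw [← inner_add_left, rRefl]
    have : β + -(β - ⟪coroot α, β⟫ • α) = ⟪coroot α, β⟫ • α := by abel
    rw [this, inner_smul_left]
    simp
  have hn : 0 < ⟪coroot α, β⟫ := by
    refine pos_of_mul_pos_left (b := ⟪α, u⟫) ?_ (hu α hα).le
    rw [← e u]
    exact add_pos (hu β (D.pos_of_mem_Rpos0 hβ)) (hu _ hδ)
  rw [foldRefl, if_neg h, e z]
  exact mul_pos hn hz

lemma theta_pos {A : ℝ} (hA : 0 ≤ A) (z : E) : 0 < D.theta A z :=
  Finset.prod_pos fun β _ => by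
    have := le_max_right ⟪β, z⟫ 0
    positivity

lemma theta_rRefl_mul_prod_le {α z : E} (hα : α ∈ D.R) {A : ℝ} (hA : 0 ≤ A) (c : E → ℝ)
    (h : ∀ β ∈ Rpos0 D, (1 + A * max (D.flipVal α z β) 0) *
      (1 + A * max (D.flipVal α z (D.foldRefl α β)) 0) * c β ^ 2 ≤
      (1 + A * max ⟪β, z⟫ 0) * (1 + A * max ⟪D.foldRefl α β, z⟫ 0)) :
    D.theta A (rRefl α z) * ∏ β ∈ Rpos0 D, c β ≤ D.theta A z := by
  have hnn : ∀ s : ℝ, 0 ≤ 1 + A * max s 0 := fun s => by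
    have := le_max_right s 0
    positivity
  refine le_of_pow_le_pow_left₀ two_ne_zero (D.theta_pos hA z).le ?_
  have h1 := Finset.prod_le_prod (fun β hβ => by
    have := hnn (D.flipVal α z β)
    have := hnn (D.flipVal α z (D.foldRefl α β))
    positivity) h
  simp only [Finset.prod_mul_distrib, Finset.prod_pow] at h1
  rw [D.prod_foldRefl hα (fun β => 1 + A * max (D.flipVal α z β) 0),
    D.prod_foldRefl hα (fun β => 1 + A * max ⟪β, z⟫ 0), ← D.theta_rRefl hα] at h1
  change _ ≤ D.theta A z * D.theta A z at h1
  calc _ = D.theta A (rRefl α z) * D.theta A (rRefl α z) * (∏ β ∈ Rpos0 D, c β) ^ 2 := by ring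
    _ ≤ _ := h1
    _ = _ := by ring

lemma flip_pair_le {α β z : E} (hα : α ∈ D.Rpos) (hz : 0 < ⟪α, z⟫)
    (hβ : β ∈ Rpos0 D) {A : ℝ} (hA : 0 ≤ A) :
    (1 + A * max (D.flipVal α z β) 0) * (1 + A * max (D.flipVal α z (D.foldRefl α β)) 0) ≤
      (1 + A * max ⟪β, z⟫ 0) * (1 + A * max ⟪D.foldRefl α β, z⟫ 0) := by
  have hαR := D.pos_subset hα
  by_cases h : rRefl α β ∈ D.Rpos
  · rw [D.flipVal_foldRefl_of_mem hαR hβ h, flipVal, if_pos h]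
  · have hs := D.inner_add_inner_foldRefl_pos hα hz hβ h
    rw [D.flipVal_foldRefl_of_notMem hαR hβ h, flipVal, if_neg h,
      mul_comm (1 + A * max ⟪β, z⟫ 0)]
    gcongr
    all_goals linarith

lemma rRefl_indivisible {α β : E} (hα : α ∈ D.Rpos) (h : β = α ∨ (2 : ℝ) • β = α) :
    rRefl α β = -β := by
  rcases h with rfl | rfl
  · exact rRefl_self (D.ne_zero_of_pos hα)
  · rw [rRefl_smul_left two_ne_zero, rRefl_self]
    rintro rfl
    exact D.ne_zero_of_pos hα (smul_zero _)

lemma inner_indivisible {α β z : E} (h : β = α ∨ (2 : ℝ) • β = α) (hz : 0 < ⟪α, z⟫) :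
    0 < ⟪β, z⟫ ∧ ⟪α, z⟫ ≤ 2 * ⟪β, z⟫ := by
  rcases h with rfl | rfl
  · exact ⟨hz, by linarith⟩
  · rw [inner_smul_left, RCLike.conj_to_real] at *
    exact ⟨by linarith, le_rfl⟩

lemma flip_indivisible {α β : E} (hα : α ∈ D.Rpos) (hβ : β ∈ Rpos0 D)
    (h : β = α ∨ (2 : ℝ) • β = α) (z : E) :
    D.foldRefl α β = β ∧ D.flipVal α z β = -⟪β, z⟫ := by
  have hn := D.neg_notMem_pos (D.pos_of_mem_Rpos0 hβ)
  have hr := D.rRefl_indivisible hα h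
  exact ⟨by rw [foldRefl, hr, if_neg hn, neg_neg], by rw [flipVal, hr, if_neg hn]⟩

lemma theta_rRefl_mul_le {α β z : E} (hα : α ∈ D.Rpos) (hz : 0 < ⟪α, z⟫)
    (hβ : β ∈ Rpos0 D) (h : β = α ∨ (2 : ℝ) • β = α) {A : ℝ} (hA : 0 ≤ A) :
    D.theta A (rRefl α z) * (1 + A * ⟪β, z⟫) ≤ D.theta A z := by
  have hb := (inner_indivisible h hz).1
  obtain ⟨e1, e2⟩ := D.flip_indivisible hα hβ h z
  have := D.theta_rRefl_mul_prod_le (z := z) (D.pos_subset hα) hA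
    (fun δ => if δ = β then 1 + A * ⟪β, z⟫ else 1)
    (fun δ hδ => by
      split_ifs with hd
      · subst hd
        rw [e1, e2, max_eq_right (by linarith), max_eq_left hb.le]
        apply le_of_eq
        ring
      · simpa using D.flip_pair_le hα hz hδ hA)
  simpa [Finset.prod_ite_eq', hβ] using this

/-- A reflection in a positive root that is positive at `z` either lowers `posCount` by one, or
gains a further factor in the reference product. -/
lemma posCount_rRefl_or {α β z : E} (hreg : HORegular D z) (hα : α ∈ D.Rpos)
    (hz : 0 < ⟪α, z⟫) (hβ : β ∈ Rpos0 D) (h : β = α ∨ (2 : ℝ) • β = α) :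
    D.posCount (rRefl α z) + 1 = D.posCount z ∨
      2 ≤ D.posCount z ∧ ∀ m : ℝ, 0 ≤ m → D.Separated m z →
        D.theta 1 (rRefl α z) * (1 + ⟪β, z⟫) * (1 + m) ≤ D.theta 1 z := by
  have hαR := D.pos_subset hα
  have hb := (inner_indivisible h hz).1
  obtain ⟨e1, e2⟩ := D.flip_indivisible hα hβ h z
  by_cases hex : ∃ δ ∈ Rpos0 D, δ ≠ β ∧ rRefl α δ ∉ D.Rpos ∧ 0 < ⟪δ, z⟫ ∧
      0 < ⟪D.foldRefl α δ, z⟫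
  · right
    obtain ⟨δ, hδ, hne, hflip, hd1, hd2⟩ := hex
    refine ⟨?_, fun m hm hsep => ?_⟩
    · rw [posCount, ← Finset.card_filter]
      have : ({δ, β} : Finset E) ⊆ (Rpos0 D).filter (fun β => 0 < ⟪β, z⟫) := by
        intro ε hε
        rcases Finset.mem_insert.1 hε with rfl | hε
        · exact Finset.mem_filter.2 ⟨hδ, hd1⟩
        · rw [Finset.mem_singleton.1 hε]
          exact Finset.mem_filter.2 ⟨hβ, hb⟩
      simpa [Finset.card_pair hne] using Finset.card_le_card this
    · have := D.theta_rRefl_mul_prod_le (z := z) hαR zero_le_one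
        (fun ε => (if ε = β then 1 + ⟪β, z⟫ else 1) * (if ε = δ then 1 + m else 1))
        (fun ε hε => by
          by_cases h1 : ε = β
          · subst h1
            rw [if_pos rfl, if_neg hne.symm, e1, e2, max_eq_right (by linarith),
              max_eq_left hb.le]
            apply le_of_eq
            ring
          rw [if_neg h1, one_mul]
          by_cases h2 : ε = δ
          · subst h2
            rw [if_pos rfl, D.flipVal_foldRefl_of_notMem hαR hδ hflip, flipVal, if_neg hflip,
              max_eq_right (by linarith), max_eq_right (by linarith), max_eq_left hd1.le,
              max_eq_left hd2.le]
            have k1 := hsep ε (D.pos_subset (D.pos_of_mem_Rpos0 hδ))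
            have k2 := hsep _ (D.pos_subset (D.pos_of_mem_Rpos0 (D.foldRefl_mem hαR hδ)))
            rw [abs_of_pos hd1] at k1
            rw [abs_of_pos hd2] at k2
            nlinarith
          · simpa [h2] using D.flip_pair_le hα hz hε zero_le_one)
      rw [Finset.prod_mul_distrib, Finset.prod_ite_eq', Finset.prod_ite_eq', if_pos hβ, if_pos hδ,
        ← mul_assoc] at this
      exact this
  · left
    push Not at hex
    set i : E → ℕ := fun δ => if 0 < ⟪δ, z⟫ then 1 else 0 with hi
    set j : E → ℕ := fun δ => if 0 < D.flipVal α z δ then 1 else 0 with hj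
    have hpt : ∀ δ ∈ Rpos0 D, i δ + i (D.foldRefl α δ) =
        j δ + j (D.foldRefl α δ) + if δ = β then 2 else 0 := by
      intro δ hδ
      by_cases h1 : δ = β
      · subst h1
        simp only [hi, hj, e1, e2]
        simp [hb, hb.le]
      by_cases hf : rRefl α δ ∈ D.Rpos
      · simp only [hi, hj, D.flipVal_foldRefl_of_mem hαR hδ hf]
        simp [flipVal, hf, h1]
      · have hs := D.inner_add_inner_foldRefl_pos hα hz hδ hf
        have hx := hex δ hδ h1 hf
        have r1 := hreg δ (D.pos_subset (D.pos_of_mem_Rpos0 hδ))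
        simp only [hi, hj, D.flipVal_foldRefl_of_notMem hαR hδ hf]
        simp only [flipVal, hf, h1, if_false]
        by_cases hd : 0 < ⟪δ, z⟫
        · have hx' := lt_of_le_of_ne (hx hd)
            (hreg _ (D.pos_subset (D.pos_of_mem_Rpos0 (D.foldRefl_mem hαR hδ))))
          simp [hd, hx', hd.not_gt, hx'.not_gt]
        · have hd' := lt_of_le_of_ne (not_lt.1 hd) r1
          have : 0 < ⟪D.foldRefl α δ, z⟫ := by linarith
          simp [hd', hd'.not_gt, this, this.not_gt]
    have hsum := Finset.sum_congr rfl hpt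
    simp only [Finset.sum_add_distrib, D.sum_foldRefl hαR, Finset.sum_ite_eq', hβ,
      if_true] at hsum
    rw [D.posCount_rRefl hαR]
    change ∑ δ ∈ Rpos0 D, j δ + 1 = ∑ δ ∈ Rpos0 D, i δ
    omega

lemma theta_rRefl_of_indecomposable {α z : E} (h : D.Indecomposable α) (hz : 0 < ⟪α, z⟫)
    (A : ℝ) : D.theta A (rRefl α z) * (1 + A * ⟪α, z⟫) = D.theta A z := by
  have hα0 := h.mem_Rpos0
  rw [D.theta_rRefl (D.pos_subset h.1), theta, ← Finset.mul_prod_erase _ _ hα0,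
    ← Finset.mul_prod_erase _ (fun β => 1 + A * max ⟪β, z⟫ 0) hα0,
    (D.flip_indivisible h.1 hα0 (Or.inl rfl) z).2, max_eq_right (by linarith),
    max_eq_left hz.le, mul_zero, add_zero, one_mul, mul_comm]
  congr 1
  refine Finset.prod_congr rfl fun β hβ => ?_
  obtain ⟨h1, h2⟩ := Finset.mem_erase.1 hβ
  rw [flipVal, if_pos (h.rRefl_mem_pos h2 h1)]

/-- Reflecting in a root changes the reference product by a factor controlled by that root. -/
lemma exists_theta_rRefl_le : ∃ c : ℝ, 0 ≤ c ∧ ∀ A : ℝ, 0 ≤ A → ∀ α ∈ D.R, ∀ z : E,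
    D.theta A (rRefl α z) ≤ (1 + A * c * |⟪α, z⟫|) ^ (Rpos0 D).card * D.theta A z := by
  set f : E → E → ℝ := fun α β => |2 / ⟪α, α⟫ * ⟪β, α⟫| with hf
  refine ⟨∑ α ∈ D.R, ∑ β ∈ D.R, f α β,
    Finset.sum_nonneg fun _ _ => Finset.sum_nonneg fun _ _ => abs_nonneg _,
    fun A hA α hα z => ?_⟩
  set c := ∑ α ∈ D.R, ∑ β ∈ D.R, f α β with hc
  rw [theta, theta, ← Finset.prod_const, ← Finset.prod_mul_distrib]
  refine Finset.prod_le_prod (fun β _ => ?_) fun β hβ => ?_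
  · have := le_max_right ⟪β, rRefl α z⟫ 0
    positivity
  · have hβR := D.pos_subset (D.pos_of_mem_Rpos0 hβ)
    have hfc : f α β ≤ c :=
      (Finset.single_le_sum (f := fun β => f α β) (fun _ _ => abs_nonneg _) hβR).trans
        (Finset.single_le_sum (f := fun α => ∑ β ∈ D.R, f α β)
          (fun _ _ => Finset.sum_nonneg fun _ _ => abs_nonneg _) hα)
    have e : ⟪β, rRefl α z⟫ = ⟪β, z⟫ - 2 / ⟪α, α⟫ * ⟪β, α⟫ * ⟪α, z⟫ := by
      simp only [rRefl, coroot, inner_sub_right, inner_smul_left, inner_smul_right,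
        RCLike.conj_to_real]
      ring
    have h1 : |2 / ⟪α, α⟫ * ⟪β, α⟫ * ⟪α, z⟫| ≤ c * |⟪α, z⟫| := by
      rw [abs_mul]
      exact mul_le_mul_of_nonneg_right hfc (abs_nonneg _)
    have hc0 : 0 ≤ c * |⟪α, z⟫| := (abs_nonneg _).trans h1
    have h2 : max ⟪β, rRefl α z⟫ 0 ≤ max ⟪β, z⟫ 0 + c * |⟪α, z⟫| := by
      refine max_le ?_ (add_nonneg (le_max_right _ _) hc0)
      rw [e]
      linarith [neg_abs_le (2 / ⟪α, α⟫ * ⟪β, α⟫ * ⟪α, z⟫), le_max_left ⟪β, z⟫ 0]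
    have h3 := mul_le_mul_of_nonneg_left h2 hA
    have h4 : 0 ≤ A * max ⟪β, z⟫ 0 * (A * (c * |⟪α, z⟫|)) :=
      mul_nonneg (mul_nonneg hA (le_max_right _ _)) (mul_nonneg hA hc0)
    nlinarith

end HOData

/-! ### A comparison principle along rays -/

/-- A cooperative family that is positive near `0` stays positive. -/
lemma pos_of_cooperative {ι : Type*} [Finite ι] (f f' : ι → ℝ → ℝ) (K : ℕ)
    (h0 : ∀ i, ∀ᶠ t in nhdsWithin (0 : ℝ) (Set.Ioi 0), 0 < f i t)
    (hd : ∀ i, ∀ t, 0 < t → HasDerivAt (f i) (f' i t) t)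
    (hineq : ∀ t, 0 < t → (∀ j, 0 ≤ f j t) → ∀ i, -(K * f i t) ≤ t * f' i t)
    (i : ι) (t : ℝ) (ht : 0 < t) : 0 < f i t := by
  by_contra hneg
  set S : Set ℝ := {t | 0 < t ∧ ∃ j, f j t ≤ 0} with hS
  have hSne : S.Nonempty := ⟨t, ht, i, not_lt.1 hneg⟩
  have hSb : BddBelow S := ⟨0, fun s hs => hs.1.le⟩
  set T := sInf S with hT
  obtain ⟨δ, hδ, hδ'⟩ : ∃ δ > 0, ∀ s, 0 < s → s < δ → ∀ j, 0 < f j s := by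
    have h1 := Filter.eventually_all.2 h0
    rw [eventually_nhdsWithin_iff, Metric.eventually_nhds_iff] at h1
    obtain ⟨δ, hδ, h⟩ := h1
    exact ⟨δ, hδ, fun s hs hs' => h (by simpa [abs_of_pos hs] using hs') hs⟩
  have hT0 : 0 < T := by
    refine lt_of_lt_of_le hδ (le_csInf hSne fun s hs => ?_)
    by_contra hlt
    obtain ⟨j, hj⟩ := hs.2
    exact absurd (hδ' s hs.1 (not_le.1 hlt) j) (not_lt.2 hj)
  have hlt : ∀ s, 0 < s → s < T → ∀ j, 0 < f j s := fun s hs hsT j => by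
    by_contra hc
    exact notMem_of_lt_csInf hsT hSb ⟨hs, j, not_lt.1 hc⟩
  have hTpos : ∀ j, 0 < f j T := by
    intro j
    have hder : ∀ s, 0 < s → HasDerivAt (fun s => s ^ K * f j s)
        (K * s ^ (K - 1) * f j s + s ^ K * f' j s) s := fun s hs =>
      (hasDerivAt_pow K s).mul (hd j s hs)
    have hmono : MonotoneOn (fun s => s ^ K * f j s) (Set.Icc (T / 2) T) := by
      refine monotoneOn_of_deriv_nonneg (convex_Icc _ _) (fun s hs => ?_) (fun s hs => ?_)
        (fun s hs => ?_)
      · exact (hder s (by linarith [hs.1])).continuousAt.continuousWithinAt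
      · rw [interior_Icc] at hs
        exact (hder s (by linarith [hs.1])).differentiableAt.differentiableWithinAt
      · rw [interior_Icc] at hs
        have hs0 : 0 < s := by linarith [hs.1]
        rw [(hder s hs0).deriv]
        have h1 := hineq s hs0 (fun j => (hlt s hs0 hs.2 j).le) j
        rcases Nat.eq_zero_or_pos K with rfl | hK
        · simp only [Nat.cast_zero, zero_mul, neg_zero] at h1
          simpa using nonneg_of_mul_nonneg_right h1 hs0
        · obtain ⟨L, rfl⟩ : ∃ L, K = L + 1 := ⟨K - 1, by omega⟩
          have : ((L + 1 : ℕ) : ℝ) * s ^ (L + 1 - 1) * f j s + s ^ (L + 1) * f' j s =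
              s ^ L * (((L + 1 : ℕ) : ℝ) * f j s + s * f' j s) := by
            rw [Nat.add_sub_cancel]
            ring
          rw [this]
          exact mul_nonneg (by positivity) (by linarith)
    have h1 := hmono (Set.left_mem_Icc.2 (by linarith)) (Set.right_mem_Icc.2 (by linarith))
      (by linarith : T / 2 ≤ T)
    have h2 : 0 < (T / 2) ^ K * f j (T / 2) :=
      mul_pos (by positivity) (hlt _ (by linarith) (by linarith) j)
    exact pos_of_mul_pos_right (lt_of_lt_of_le h2 h1) (by positivity)
  have hnear : ∀ᶠ s in nhds T, ∀ j, 0 < f j s :=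
    Filter.eventually_all.2 fun j =>
      (hd j T hT0).continuousAt.eventually (lt_mem_nhds (hTpos j))
  obtain ⟨s, hs, hsS⟩ := mem_closure_iff_nhds.1 (csInf_mem_closure hSne hSb) _ hnear
  obtain ⟨-, j, hj⟩ := hsS
  exact absurd (hs j) (not_lt.2 hj)

/-- `f` has derivative `v` at `z` in the direction `z`. -/
def HasRadialDerivAt (f : E → ℝ) (v : ℝ) (z : E) : Prop :=
  HasDerivAt (fun t : ℝ => f (t • z)) v 1

lemma HasRadialDerivAt.hasDerivAt {f : E → ℝ} {v t : ℝ} {z : E} (ht : t ≠ 0)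
    (h : HasRadialDerivAt f v (t • z)) : HasDerivAt (fun s : ℝ => f (s • z)) (v / t) t := by
  have h1 : HasDerivAt (fun s : ℝ => s / t) (1 / t) t := (hasDerivAt_id t).div_const t
  have h2 : HasDerivAt (fun s : ℝ => f (s • t • z)) v (t / t) := by
    rw [div_self ht]
    exact h
  have h3 := HasDerivAt.comp (h := fun s : ℝ => s / t) t h2 h1
  have e : (fun s : ℝ => f (s • z)) = (fun s : ℝ => f (s • t • z)) ∘ fun s => s / t := by
    funext s
    simp [smul_smul, div_mul_cancel₀ _ ht]
  rw [e, div_eq_mul_one_div]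
  exact h3

lemma hasRadialDerivAt_of_homogeneous {f : E → ℝ} {z : E}
    (h : ∀ t : ℝ, 0 < t → f (t • z) = t * f z) : HasRadialDerivAt f (f z) z := by
  have h1 : HasDerivAt (fun t : ℝ => t * f z) (1 * f z) 1 := (hasDerivAt_id 1).mul_const _
  rw [one_mul] at h1
  refine h1.congr_of_eventuallyEq ?_
  filter_upwards [lt_mem_nhds (zero_lt_one (α := ℝ))] with t ht using h t ht

lemma max_inner_smul (β z : E) {t : ℝ} (ht : 0 < t) :
    max ⟪β, t • z⟫ 0 = t * max ⟪β, z⟫ 0 := by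
  rw [inner_smul_right, mul_max_of_nonneg _ _ ht.le, mul_zero]

lemma abs_inner_smul (β z : E) {t : ℝ} (ht : 0 < t) :
    |⟪β, t • z⟫| = t * |⟪β, z⟫| := by
  rw [inner_smul_right, abs_mul, abs_of_pos ht]

/-- The reflection in `α` as a linear isometry. -/
lemma exists_isometry_eq_rRefl (α : E) : ∃ w : E ≃ₗᵢ[ℝ] E, ∀ x, w x = rRefl α x := by
  refine ⟨(ℝ ∙ α)ᗮ.reflection, fun x => ?_⟩
  rw [Submodule.reflection_orthogonal_apply, Submodule.reflection_singleton_apply, rRefl, coroot,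
    real_inner_self_eq_norm_sq, inner_smul_left, RCLike.conj_to_real, neg_sub]
  rw [two_smul, ← add_smul]
  congr 2
  simp
  ring

lemma weyl_invariant (D : HOData E) {S : Type*} (P : E → S)
    (h : ∀ α ∈ D.R, ∀ z, P (rRefl α z) = P z) (w : weylGroup D) (z : E) : P (w.1 z) = P z := by
  obtain ⟨w, hw⟩ := w
  change P (w z) = P z
  induction hw using Subgroup.closure_induction generalizing z with
  | mem w hw =>
    obtain ⟨α, hα, hw⟩ := hw
    rw [hw, h α hα]
  | one => rfl
  | mul v w _ _ hv hw =>
    change P (v (w z)) = P z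
    rw [hv, hw]
  | inv w _ hw =>
    rw [← hw (w⁻¹ z)]
    congr 1
    exact w.apply_symm_apply z

namespace HOData

variable (D : HOData E)

lemma regular_weyl (w : weylGroup D) {z : E} (hz : HORegular D z) : HORegular D (w.1 z) := by
  rw [weyl_invariant D (HORegular D) (fun α hα z => ?_)]
  · exact hz
  · refine propext ⟨fun h => ?_, D.regular_rRefl hα⟩
    simpa [rRefl_rRefl (D.root_ne_zero α hα)] using D.regular_rRefl hα h

/-- The operator governing the radial derivative of the rescaled Opdam function. -/
def radialOp (f : E → ℝ) (z : E) : ℝ :=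
  ∑ α ∈ D.Rpos, D.k α * (max ⟪α, z⟫ 0 * f (rRefl α z) +
    bernoulliKernel |⟪α, z⟫| * (f (rRefl α z) - f z))

lemma k_pos_of_pos {α : E} (hα : α ∈ D.Rpos) : 0 < D.k α := D.k_pos α (D.pos_subset hα)

lemma abs_inner_pos {α z : E} (hα : α ∈ D.Rpos) (hz : HORegular D z) : 0 < |⟪α, z⟫| :=
  abs_pos.2 (hz α (D.pos_subset hα))

/-- A strict positivity principle for supersolutions of the radial system. -/
lemma pos_of_radialOp_le [Finite (weylGroup D)] {f f' : E → ℝ} (hf : Continuous f)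
    (h0 : 0 < f 0) (hd : ∀ z, HORegular D z → HasRadialDerivAt f (f' z) z)
    (hL : ∀ z, HORegular D z → D.radialOp f z ≤ f' z) {z : E} (hz : HORegular D z) :
    0 < f z := by
  obtain ⟨K, hK⟩ := exists_nat_ge (∑ α ∈ D.Rpos, D.k α)
  have key := pos_of_cooperative (ι := weylGroup D) (fun w t => f (t • w.1 z))
    (fun w t => f' (t • w.1 z) / t) K (fun w => ?_) (fun w t ht => ?_) (fun t ht hnn w => ?_)
    1 1 one_pos
  · simpa using key
  · have h1 : Continuous fun t : ℝ => f (t • w.1 z) := by fun_prop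
    have h2 : 0 < f ((0 : ℝ) • w.1 z) := by simpa using h0
    exact (h1.continuousAt.eventually (lt_mem_nhds h2)).filter_mono nhdsWithin_le_nhds
  · exact (hd _ (D.regular_smul ht.ne' (D.regular_weyl w hz))).hasDerivAt ht.ne'
  · have hreg := D.regular_smul ht.ne' (D.regular_weyl w hz)
    set y := t • w.1 z with hy
    have hr : ∀ α ∈ D.Rpos, 0 ≤ f (rRefl α y) := by
      intro α hα
      obtain ⟨v, hv⟩ := exists_isometry_eq_rRefl α
      have hvW : v ∈ weylGroup D := Subgroup.subset_closure ⟨α, D.pos_subset hα, hv⟩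
      have := hnn (⟨v, hvW⟩ * w)
      change 0 ≤ f (t • v (w.1 z)) at this
      rwa [hv, ← rRefl_smul] at this
    have hy0 : 0 ≤ f y := hnn w
    change -(K * f y) ≤ t * (f' y / t)
    rw [mul_div_cancel₀ _ ht.ne']
    refine le_trans ?_ (hL y hreg)
    have h1 : -(K * f y) ≤ ∑ α ∈ D.Rpos, -(D.k α * f y) := by
      rw [Finset.sum_neg_distrib, ← Finset.sum_mul]
      exact neg_le_neg (mul_le_mul_of_nonneg_right hK hy0)
    refine h1.trans (Finset.sum_le_sum fun α hα => ?_)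
    have hs := D.abs_inner_pos hα hreg
    have hk := D.k_pos_of_pos hα
    have b0 := bernoulliKernel_pos hs
    have b1 := bernoulliKernel_le_one hs
    have hrα := hr α hα
    rw [← mul_neg]
    refine mul_le_mul_of_nonneg_left ?_ hk.le
    have c1 : 0 ≤ max ⟪α, y⟫ 0 * f (rRefl α y) := mul_nonneg (le_max_right _ _) hrα
    nlinarith [mul_nonneg b0.le hrα, mul_nonneg (sub_nonneg.2 b1) hy0]

/-! ### The rescaled Opdam function -/

/-- `½ ∑_{α > 0} k_α |(α, z)|`. -/
def absRho (z : E) : ℝ := 4⁻¹ * ∑ γ ∈ D.R, D.k γ * |⟪γ, z⟫|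

/-- The Opdam function with its exponential decay removed. -/
def rescaled (G : E → ℝ) (z : E) : ℝ := Real.exp (D.absRho z) * G z

lemma absRho_rRefl {α : E} (hα : α ∈ D.R) (z : E) : D.absRho (rRefl α z) = D.absRho z := by
  rw [absRho, absRho, ← D.sum_rRefl hα (fun γ => D.k γ * |⟪γ, z⟫|)]
  congr 1
  exact Finset.sum_congr rfl fun γ hγ => by rw [inner_rRefl, D.k_inv α hα γ hγ]

lemma absRho_eq (z : E) : D.absRho z = ∑ α ∈ D.Rpos, 2⁻¹ * (D.k α * |⟪α, z⟫|) := by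
  rw [absRho, D.sum_even _ fun α hα => by rw [D.k_neg hα, inner_neg_left, abs_neg],
    ← Finset.mul_sum]
  ring

lemma absRho_smul {t : ℝ} (ht : 0 < t) (z : E) : D.absRho (t • z) = t * D.absRho z := by
  simp only [absRho, abs_inner_smul _ _ ht, Finset.mul_sum]
  exact Finset.sum_congr rfl fun _ _ => by ring

lemma inner_rhoHO (z : E) : ⟪rhoHO D, z⟫ = ∑ α ∈ D.Rpos, 2⁻¹ * (D.k α * ⟪α, z⟫) := by
  simp only [rhoHO, inner_smul_left, sum_inner, RCLike.conj_to_real, Finset.mul_sum]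

lemma continuous_absRho : Continuous D.absRho := by
  unfold absRho
  fun_prop

lemma continuous_rescaled {G : E → ℝ} (hG : Continuous G) : Continuous (D.rescaled G) :=
  (Real.continuous_exp.comp D.continuous_absRho).mul hG

lemma hasRadialDerivAt_rescaled {G : E → ℝ} (hG : IsOpdamR D 0 G) {z : E}
    (hz : HORegular D z) :
    HasRadialDerivAt (D.rescaled G) (D.radialOp (D.rescaled G) z) z := by
  have h1 : HasDerivAt (fun t : ℝ => D.absRho (t • z)) (D.absRho z) 1 :=
    hasRadialDerivAt_of_homogeneous fun t ht => D.absRho_smul ht z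
  have h2 : HasDerivAt (fun t : ℝ => G (t • z)) (fderiv ℝ G z z) 1 := by
    have hG1 : HasFDerivAt G (fderiv ℝ G z) ((1 : ℝ) • z) := by
      rw [one_smul]
      exact (hG.1 z (Set.mem_univ z)).differentiableAt.hasFDerivAt
    have hs : HasDerivAt (fun t : ℝ => t • z) ((1 : ℝ) • z) 1 := (hasDerivAt_id 1).smul_const z
    have hc := hG1.comp_hasDerivAt 1 hs
    rw [one_smul] at hc
    exact hc
  have h3 := h1.exp.mul h2
  refine h3.congr_deriv ?_
  simp only [one_smul]
  rw [hG.2.2 z z hz, add_zero, D.inner_rhoHO, D.absRho_eq, radialOp]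
  have hr : ∀ α ∈ D.Rpos, D.rescaled G (rRefl α z) = Real.exp (D.absRho z) * G (rRefl α z) :=
    fun α hα => by rw [rescaled, D.absRho_rRefl (D.pos_subset hα)]
  rw [← D.absRho_eq, mul_assoc, ← mul_add, D.absRho_eq, Finset.sum_mul, Finset.sum_mul,
    ← Finset.sum_add_distrib, ← Finset.sum_add_distrib, ← D.absRho_eq, Finset.mul_sum]
  refine Finset.sum_congr rfl fun α hα => ?_
  rw [hr α hα, rescaled, mul_div_assoc, div_one_sub_exp_neg (hz α (D.pos_subset hα))]
  have hm : 2 * max ⟪α, z⟫ 0 = ⟪α, z⟫ + |⟪α, z⟫| := by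
    rcases le_total 0 ⟪α, z⟫ with h | h
    · rw [max_eq_left h, abs_of_nonneg h]; ring
    · rw [max_eq_right h, abs_of_nonpos h]; ring
  have hm' : |⟪α, z⟫| = 2 * max ⟪α, z⟫ 0 - ⟪α, z⟫ := by linarith
  generalize bernoulliKernel |⟪α, z⟫| = b
  rw [hm']
  ring

end HOData

/-! ### Barriers -/

lemma pow_sub_one_le {x : ℝ} (hx : 1 ≤ x) (n : ℕ) : x ^ n - 1 ≤ n * (x - 1) * x ^ n := by
  induction n with
  | zero => simp
  | succ n ih =>
    have h1 := mul_le_mul_of_nonneg_left ih (by linarith : 0 ≤ x)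
    have h2 : 1 ≤ x ^ (n + 1) := one_le_pow₀ hx
    push_cast
    rw [pow_succ] at *
    nlinarith

lemma hasDerivAt_prod_of_mul {ι : Type*} (s : Finset ι) (g : ι → ℝ → ℝ) (τ : ι → ℝ) (x : ℝ)
    (h : ∀ i ∈ s, HasDerivAt (g i) (g i x * τ i) x) :
    HasDerivAt (fun t => ∏ i ∈ s, g i t) ((∏ i ∈ s, g i x) * ∑ i ∈ s, τ i) x := by
  induction s using Finset.induction_on with
  | empty => simpa using hasDerivAt_const x (1 : ℝ)
  | insert i s hi ih =>
    simp only [Finset.prod_insert hi, Finset.sum_insert hi]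
    have h1 := (h i (Finset.mem_insert_self i s)).mul
      (ih fun j hj => h j (Finset.mem_insert_of_mem hj))
    exact h1.congr_deriv (by ring)

namespace HOData

variable (D : HOData E)

/-- The Weyl-invariant sum of `1 / (1 + |(γ, z)|)` over all roots. -/
def invSum (z : E) : ℝ := ∑ γ ∈ D.R, (1 + |⟪γ, z⟫|)⁻¹

/-- Minus the radial derivative of `invSum`. -/
def invSumDecay (z : E) : ℝ := ∑ γ ∈ D.R, |⟪γ, z⟫| / (1 + |⟪γ, z⟫|) ^ 2

/-- The radial logarithmic derivative of `theta`. -/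
def thetaLogDeriv (A : ℝ) (z : E) : ℝ :=
  ∑ β ∈ Rpos0 D, A * max ⟪β, z⟫ 0 / (1 + A * max ⟪β, z⟫ 0)

/-- The barrier functions used to compare with the rescaled Opdam function. -/
def barrier (A B : ℝ) (z : E) : ℝ := D.theta A z * Real.exp (B * D.invSum z)

/-- The ratio of the reference product before and after a reflection. -/
def thetaRatio (A : ℝ) (α z : E) : ℝ := D.theta A (rRefl α z) / D.theta A z

lemma hasRadialDerivAt_barrier {A : ℝ} (hA : 0 ≤ A) (B : ℝ) (z : E) :
    HasRadialDerivAt (D.barrier A B)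
      (D.barrier A B z * (D.thetaLogDeriv A z - B * D.invSumDecay z)) z := by
  have hm : ∀ β : E, HasDerivAt (fun t : ℝ => max ⟪β, t • z⟫ 0) (max ⟪β, z⟫ 0) 1 := fun β =>
    hasRadialDerivAt_of_homogeneous (f := fun z => max ⟪β, z⟫ 0)
      fun t ht => max_inner_smul β z ht
  have ha : ∀ γ : E, HasDerivAt (fun t : ℝ => |⟪γ, t • z⟫|) |⟪γ, z⟫| 1 := fun γ =>
    hasRadialDerivAt_of_homogeneous (f := fun z => |⟪γ, z⟫|) fun t ht => abs_inner_smul γ z ht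
  have h1 : HasDerivAt (fun t : ℝ => D.theta A (t • z))
      (D.theta A ((1 : ℝ) • z) * D.thetaLogDeriv A z) 1 := by
    refine hasDerivAt_prod_of_mul (Rpos0 D) (fun β t => 1 + A * max ⟪β, t • z⟫ 0) _ 1
      fun β _ => ?_
    have hp : 0 < 1 + A * max ⟪β, z⟫ 0 := by
      have := le_max_right ⟪β, z⟫ 0
      positivity
    refine (((hm β).const_mul A).const_add 1).congr_deriv ?_
    rw [one_smul]
    field_simp
  have h2 : HasDerivAt (fun t : ℝ => D.invSum (t • z)) (-D.invSumDecay z) 1 := by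
    rw [invSumDecay, ← Finset.sum_neg_distrib]
    refine HasDerivAt.fun_sum fun γ _ => ?_
    have hne : (1 : ℝ) + |⟪γ, (1 : ℝ) • z⟫| ≠ 0 := by positivity
    refine (((ha γ).const_add 1).fun_inv hne).congr_deriv ?_
    rw [one_smul, neg_div]
  refine (h1.mul (h2.const_mul B).exp).congr_deriv ?_
  simp only [one_smul, barrier]
  ring

lemma invSum_rRefl {α : E} (hα : α ∈ D.R) (z : E) : D.invSum (rRefl α z) = D.invSum z := by
  rw [invSum, invSum, ← D.sum_rRefl hα (fun γ => (1 + |⟪γ, z⟫|)⁻¹)]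
  exact Finset.sum_congr rfl fun γ _ => by rw [inner_rRefl]

lemma barrier_rRefl {α : E} (hα : α ∈ D.R) {A : ℝ} (hA : 0 ≤ A) (B : ℝ) (z : E) :
    D.barrier A B (rRefl α z) = D.barrier A B z * D.thetaRatio A α z := by
  have := (D.theta_pos hA z).ne'
  rw [barrier, barrier, D.invSum_rRefl hα, thetaRatio]
  field_simp

lemma barrier_pos {A : ℝ} (hA : 0 ≤ A) (B : ℝ) (z : E) : 0 < D.barrier A B z :=
  mul_pos (D.theta_pos hA z) (Real.exp_pos _)

lemma continuous_barrier (A B : ℝ) : Continuous (D.barrier A B) := by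
  have h1 : Continuous (D.theta A) := by
    unfold theta
    fun_prop
  have h2 : Continuous D.invSum := by
    unfold invSum
    exact continuous_finsetSum _ fun γ _ =>
      Continuous.inv₀ (by fun_prop) fun z => by positivity
  exact h1.mul (Real.continuous_exp.comp (h2.const_mul B))

lemma barrier_zero (A B : ℝ) : D.barrier A B 0 = Real.exp (B * D.R.card) := by
  simp [barrier, theta, invSum]

lemma thetaRatio_nonneg {A : ℝ} (hA : 0 ≤ A) (α z : E) : 0 ≤ D.thetaRatio A α z :=
  div_nonneg (D.theta_pos hA _).le (D.theta_pos hA _).le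

lemma radialOp_barrier {A : ℝ} (hA : 0 ≤ A) (B : ℝ) (z : E) :
    D.radialOp (D.barrier A B) z = D.barrier A B z *
      (∑ α ∈ D.Rpos, D.k α * (max ⟪α, z⟫ 0 * D.thetaRatio A α z) +
        ∑ α ∈ D.Rpos, D.k α * (bernoulliKernel |⟪α, z⟫| * (D.thetaRatio A α z - 1))) := by
  rw [radialOp, ← Finset.sum_add_distrib, Finset.mul_sum]
  refine Finset.sum_congr rfl fun α hα => ?_
  rw [D.barrier_rRefl (D.pos_subset hα) hA]
  ring

lemma abs_inner_rRefl_self {α : E} (hα : α ≠ 0) (z : E) : |⟪α, rRefl α z⟫| = |⟪α, z⟫| := by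
  rw [inner_rRefl, rRefl_self hα, inner_neg_left, abs_neg]

lemma exists_kernel_sum_le {A : ℝ} (hA : 0 ≤ A) :
    ∃ B : ℝ, 0 ≤ B ∧ ∀ z, HORegular D z →
      |∑ α ∈ D.Rpos, D.k α * (bernoulliKernel |⟪α, z⟫| * (D.thetaRatio A α z - 1))|
        ≤ B * D.invSumDecay z := by
  obtain ⟨c, hc, hθ⟩ := D.exists_theta_rRefl_le
  set N := (Rpos0 D).card with hN
  obtain ⟨C, hC, hb⟩ := exists_bernoulliKernel_mul_pow_le (N + 2)
  have hK : 0 ≤ ∑ α ∈ D.Rpos, D.k α := Finset.sum_nonneg fun α hα => (D.k_pos_of_pos hα).le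
  set C' := N * (A * c) * (1 + A * c) ^ N * C with hC'
  have hC'0 : 0 ≤ C' := by positivity
  refine ⟨(∑ α ∈ D.Rpos, D.k α) * C', by positivity, fun z hz => ?_⟩
  refine (Finset.abs_sum_le_sum_abs _ _).trans ?_
  rw [mul_assoc, Finset.sum_mul]
  refine Finset.sum_le_sum fun α hα => ?_
  have hk := D.k_pos_of_pos hα
  have hαR := D.pos_subset hα
  have hs := D.abs_inner_pos hα hz
  have h0 := D.theta_pos hA z
  have h0' := D.theta_pos hA (rRefl α z)
  have hb0 := bernoulliKernel_pos hs
  rw [abs_mul, abs_of_pos hk, abs_mul, abs_of_pos hb0]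
  refine mul_le_mul_of_nonneg_left ?_ hk.le
  have hterm : |⟪α, z⟫| / (1 + |⟪α, z⟫|) ^ 2 ≤ D.invSumDecay z :=
    Finset.single_le_sum (f := fun γ => |⟪γ, z⟫| / (1 + |⟪γ, z⟫|) ^ 2)
      (fun γ _ => by positivity) hαR
  refine le_trans ?_ (mul_le_mul_of_nonneg_left hterm hC'0)
  have u1 := hθ A hA α hαR z
  have u2 := hθ A hA α hαR (rRefl α z)
  rw [rRefl_rRefl (D.root_ne_zero α hαR), abs_inner_rRefl_self (D.root_ne_zero α hαR)] at u2
  set s := |⟪α, z⟫| with hsdef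
  set x := 1 + A * c * s with hx
  have hx1 : 1 ≤ x := by
    have : 0 ≤ A * c * s := by positivity
    linarith
  have hpow := pow_sub_one_le hx1 N
  have hxN : 1 ≤ x ^ N := one_le_pow₀ hx1
  have hr : |D.thetaRatio A α z - 1| ≤ x ^ N - 1 := by
    rw [thetaRatio, abs_le]
    constructor
    · have : 1 ≤ x ^ N * (D.theta A (rRefl α z) / D.theta A z) := by
        rw [← mul_div_assoc, le_div_iff₀ h0]
        linarith
      have hp : 0 < D.theta A (rRefl α z) / D.theta A z := div_pos h0' h0
      by_cases h1 : 1 ≤ D.theta A (rRefl α z) / D.theta A z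
      · linarith
      · nlinarith
    · have := (div_le_iff₀ h0).2 u1
      linarith
  have hx2 : x ^ N ≤ (1 + A * c) ^ N * (1 + s) ^ N := by
    rw [← mul_pow]
    refine pow_le_pow_left₀ (by linarith) ?_ N
    have : 0 ≤ A * c := by positivity
    nlinarith
  have hb1 := hb s hs
  calc bernoulliKernel s * |D.thetaRatio A α z - 1|
      ≤ bernoulliKernel s * (N * (x - 1) * ((1 + A * c) ^ N * (1 + s) ^ N)) := by
        refine mul_le_mul_of_nonneg_left (hr.trans (hpow.trans ?_)) hb0.le
        exact mul_le_mul_of_nonneg_left hx2 (mul_nonneg (by positivity) (by linarith))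
    _ = N * (A * c) * (1 + A * c) ^ N * (bernoulliKernel s * (1 + s) ^ (N + 2)) *
          (s / (1 + s) ^ 2) := by
        rw [hx]
        field_simp
        ring
    _ ≤ C' * (s / (1 + s) ^ 2) := by
        refine mul_le_mul_of_nonneg_right ?_ (by positivity)
        rw [hC']
        exact mul_le_mul_of_nonneg_left hb1 (by positivity)

lemma exists_barrier_super : ∃ A : ℝ, 1 ≤ A ∧ ∃ B : ℝ, 0 ≤ B ∧ ∀ z, HORegular D z →
    D.radialOp (D.barrier A (-B)) z ≤
      D.barrier A (-B) z * (D.thetaLogDeriv A z - -B * D.invSumDecay z) := by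
  have hK : 0 ≤ ∑ α ∈ D.Rpos, D.k α := Finset.sum_nonneg fun α hα => (D.k_pos_of_pos hα).le
  set K := ∑ α ∈ D.Rpos, D.k α with hKdef
  set A := 1 + 2 * K with hAdef
  have hA : 0 < A := by positivity
  obtain ⟨B, hB, hker⟩ := D.exists_kernel_sum_le hA.le
  refine ⟨A, by linarith, B, hB, fun z hz => ?_⟩
  rw [D.radialOp_barrier hA.le]
  refine mul_le_mul_of_nonneg_left ?_ (D.barrier_pos hA.le _ z).le
  have h2 := (le_abs_self _).trans (hker z hz)
  have hT : 0 ≤ D.thetaLogDeriv A z := Finset.sum_nonneg fun β _ => by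
    have := le_max_right ⟪β, z⟫ 0
    positivity
  have h1 : ∑ α ∈ D.Rpos, D.k α * (max ⟪α, z⟫ 0 * D.thetaRatio A α z) ≤
      K * (2 / A * D.thetaLogDeriv A z) := by
    rw [hKdef, Finset.sum_mul]
    refine Finset.sum_le_sum fun α hα =>
      mul_le_mul_of_nonneg_left ?_ (D.k_pos_of_pos hα).le
    rcases le_or_gt ⟪α, z⟫ 0 with h | h
    · rw [max_eq_right h, zero_mul]
      positivity
    · obtain ⟨β, hβ, hβα⟩ := D.exists_indivisible hα
      obtain ⟨hb, hab⟩ := inner_indivisible hβα h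
      have hθ := D.theta_rRefl_mul_le hα h hβ hβα hA.le
      have hp : 0 < 1 + A * ⟪β, z⟫ := by positivity
      have hr : D.thetaRatio A α z ≤ 1 / (1 + A * ⟪β, z⟫) := by
        rw [thetaRatio, div_le_div_iff₀ (D.theta_pos hA.le z) hp]
        linarith
      have hτ : A * ⟪β, z⟫ / (1 + A * ⟪β, z⟫) ≤ D.thetaLogDeriv A z := by
        have := Finset.single_le_sum
          (f := fun β => A * max ⟪β, z⟫ 0 / (1 + A * max ⟪β, z⟫ 0))
          (fun β _ => by
            have := le_max_right ⟪β, z⟫ 0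
            positivity) hβ
        simp only [max_eq_left hb.le] at this
        exact this
      rw [max_eq_left h.le]
      calc ⟪α, z⟫ * D.thetaRatio A α z ≤ 2 * ⟪β, z⟫ * (1 / (1 + A * ⟪β, z⟫)) :=
            mul_le_mul hab hr (D.thetaRatio_nonneg hA.le α z) (by positivity)
        _ = 2 / A * (A * ⟪β, z⟫ / (1 + A * ⟪β, z⟫)) := by field_simp
        _ ≤ _ := mul_le_mul_of_nonneg_left hτ (by positivity)
  have h3 : K * (2 / A * D.thetaLogDeriv A z) ≤ D.thetaLogDeriv A z := by
    have : K * (2 / A) ≤ 1 := by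
      rw [← mul_div_assoc, div_le_one hA]
      linarith
    nlinarith
  linarith

lemma exists_k_ge : ∃ κ : ℝ, 0 < κ ∧ ∀ α ∈ D.R, κ ≤ D.k α := by
  rcases D.R.eq_empty_or_nonempty with h | h
  · exact ⟨1, one_pos, by simp [h]⟩
  · obtain ⟨α, hα, hmin⟩ := D.R.exists_min_image D.k h
    exact ⟨D.k α, D.k_pos α hα, hmin⟩

lemma exists_barrier_sub : ∃ a : ℝ, 0 < a ∧ a ≤ 1 ∧ ∃ B : ℝ, 0 ≤ B ∧ ∀ z, HORegular D z →
    D.barrier a B z * (D.thetaLogDeriv a z - B * D.invSumDecay z) ≤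
      D.radialOp (D.barrier a B) z := by
  obtain ⟨κ, hκ, hk⟩ := D.exists_k_ge
  obtain ⟨c, hc, hc1, hdom⟩ := D.exists_indecomposable_dominant
  set N := (Rpos0 D).card with hN
  set a := min 1 (c * κ / (N + 1)) with hadef
  have ha : 0 < a := lt_min one_pos (by positivity)
  obtain ⟨B, hB, hker⟩ := D.exists_kernel_sum_le ha.le
  refine ⟨a, ha, min_le_left _ _, B, hB, fun z hz => ?_⟩
  rw [D.radialOp_barrier ha.le]
  refine mul_le_mul_of_nonneg_left ?_ (D.barrier_pos ha.le _ z).le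
  have h2 := (neg_le_of_abs_le (hker z hz))
  have hnn : ∀ α ∈ D.Rpos, 0 ≤ D.k α * (max ⟪α, z⟫ 0 * D.thetaRatio a α z) := fun α hα =>
    mul_nonneg (D.k_pos_of_pos hα).le
      (mul_nonneg (le_max_right _ _) (D.thetaRatio_nonneg ha.le α z))
  suffices h1 : D.thetaLogDeriv a z ≤
      ∑ α ∈ D.Rpos, D.k α * (max ⟪α, z⟫ 0 * D.thetaRatio a α z) by linarith
  by_cases hex : ∃ β ∈ D.Rpos, 0 < ⟪β, z⟫
  · obtain ⟨α, hind, hα, hle⟩ := hdom z hex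
    refine le_trans ?_ (Finset.single_le_sum hnn hind.1)
    have hp : 0 < 1 + a * ⟪α, z⟫ := by positivity
    have hr : D.thetaRatio a α z = 1 / (1 + a * ⟪α, z⟫) := by
      rw [thetaRatio, div_eq_div_iff (D.theta_pos ha.le z).ne' hp.ne', one_mul,
        D.theta_rRefl_of_indecomposable hind hα]
    have hT : D.thetaLogDeriv a z ≤ ∑ _β ∈ Rpos0 D, a * ⟪α, z⟫ / c / (1 + a * ⟪α, z⟫) := by
      refine Finset.sum_le_sum fun β hβ => ?_
      have hβ' := hle β (D.pos_of_mem_Rpos0 hβ)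
      have hm0 := le_max_right ⟪β, z⟫ 0
      have hm : c * max ⟪β, z⟫ 0 ≤ ⟪α, z⟫ := by
        rw [mul_max_of_nonneg _ _ hc.le, mul_zero]
        exact max_le hβ' hα.le
      set m := max ⟪β, z⟫ 0 with hmdef
      rw [div_div, div_le_div_iff₀ (by positivity) (by positivity)]
      have e1 : a * m * (c * (1 + a * ⟪α, z⟫)) = a * (c * m) + a * a * ⟪α, z⟫ * m * c := by ring
      have e2 : a * ⟪α, z⟫ * (1 + a * m) = a * ⟪α, z⟫ + a * a * ⟪α, z⟫ * m := by ring
      rw [e1, e2]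
      have f1 := mul_le_mul_of_nonneg_left hm ha.le
      have f2 : 0 ≤ a * a * ⟪α, z⟫ * m := by positivity
      nlinarith
    rw [Finset.sum_const, nsmul_eq_mul, ← hN] at hT
    refine hT.trans ?_
    rw [hr, max_eq_left hα.le]
    have ha2 : a * (N + 1) ≤ c * κ := by
      have := min_le_right (1 : ℝ) (c * κ / (N + 1))
      rwa [← hadef, le_div_iff₀ (by positivity)] at this
    have hkα := hk α (D.pos_subset hind.1)
    have e : (N : ℝ) * (a * ⟪α, z⟫ / c / (1 + a * ⟪α, z⟫)) =
        (N * a / c) * (⟪α, z⟫ * (1 / (1 + a * ⟪α, z⟫))) := by ring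
    rw [e]
    refine mul_le_mul_of_nonneg_right ?_ (by positivity)
    rw [div_le_iff₀ hc]
    nlinarith
  · push Not at hex
    have hT : D.thetaLogDeriv a z = 0 := Finset.sum_eq_zero fun β hβ => by
      rw [max_eq_right (hex β (D.pos_of_mem_Rpos0 hβ))]
      simp
    rw [hT]
    exact Finset.sum_nonneg hnn

/-! ### Sharp two-sided estimate -/

lemma radialOp_sub (f g : E → ℝ) (c d : ℝ) (z : E) :
    D.radialOp (fun z => c * f z - d * g z) z = c * D.radialOp f z - d * D.radialOp g z := by
  simp only [radialOp, Finset.mul_sum, ← Finset.sum_sub_distrib]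
  exact Finset.sum_congr rfl fun _ _ => by ring

lemma invSum_nonneg (z : E) : 0 ≤ D.invSum z :=
  Finset.sum_nonneg fun γ _ => by positivity

lemma theta_le_pow_mul {A : ℝ} (hA : 1 ≤ A) (z : E) :
    D.theta A z ≤ A ^ (Rpos0 D).card * D.theta 1 z := by
  rw [theta, theta, ← Finset.prod_const, ← Finset.prod_mul_distrib]
  refine Finset.prod_le_prod (fun β _ => ?_) fun β _ => ?_
  · have := le_max_right ⟪β, z⟫ 0
    positivity
  · linarith

lemma pow_mul_theta_le {a : ℝ} (ha : 0 < a) (ha1 : a ≤ 1) (z : E) :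
    a ^ (Rpos0 D).card * D.theta 1 z ≤ D.theta a z := by
  rw [theta, theta, ← Finset.prod_const, ← Finset.prod_mul_distrib]
  refine Finset.prod_le_prod (fun β _ => ?_) fun β _ => ?_
  · have := le_max_right ⟪β, z⟫ 0
    positivity
  · linarith

variable {D}

lemma rescaled_zero {G : E → ℝ} (hG : IsOpdamR D 0 G) : D.rescaled G 0 = 1 := by
  simp [rescaled, absRho, hG.2.1]

lemma continuous_of_isOpdamR {G : E → ℝ} (hG : IsOpdamR D 0 G) : Continuous G :=
  continuousOn_univ.1 hG.1.continuousOn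

lemma exists_rescaled_le [Finite (weylGroup D)] {G : E → ℝ} (hG : IsOpdamR D 0 G) :
    ∃ C : ℝ, 0 < C ∧ ∀ z, HORegular D z → D.rescaled G z ≤ C * D.theta 1 z := by
  obtain ⟨A, hA, B, hB, hsup⟩ := D.exists_barrier_super
  have hA0 : 0 ≤ A := by linarith
  set M := 2 * Real.exp (B * D.R.card) with hM
  refine ⟨M * A ^ (Rpos0 D).card, by positivity, fun z hz => ?_⟩
  have hpos := D.pos_of_radialOp_le
    (f := fun z => M * D.barrier A (-B) z - 1 * D.rescaled G z)
    (f' := fun z => M * (D.barrier A (-B) z * (D.thetaLogDeriv A z - -B * D.invSumDecay z)) -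
      1 * D.radialOp (D.rescaled G) z)
    (((D.continuous_barrier A (-B)).const_mul M).sub
      ((D.continuous_rescaled (continuous_of_isOpdamR hG)).const_mul 1)) ?_
    (fun z hz => ((D.hasRadialDerivAt_barrier hA0 (-B) z).const_mul M).sub
      ((D.hasRadialDerivAt_rescaled hG hz).const_mul 1))
    (fun z hz => ?_) hz
  · have h1 : D.barrier A (-B) z ≤ A ^ (Rpos0 D).card * D.theta 1 z := by
      refine le_trans ?_ (D.theta_le_pow_mul hA z)
      refine mul_le_of_le_one_right (D.theta_pos hA0 z).le (Real.exp_le_one_iff.2 ?_)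
      nlinarith [D.invSum_nonneg z]
    have h2 := mul_le_mul_of_nonneg_left h1 (by positivity : 0 ≤ M)
    simp only [one_mul] at hpos
    linarith
  · simp only [barrier_zero, rescaled_zero hG, hM]
    rw [mul_assoc, ← Real.exp_add]
    simp
  · rw [D.radialOp_sub]
    exact sub_le_sub_right (mul_le_mul_of_nonneg_left (hsup z hz) (by positivity)) _

lemma exists_le_rescaled [Finite (weylGroup D)] {G : E → ℝ} (hG : IsOpdamR D 0 G) :
    ∃ c : ℝ, 0 < c ∧ ∀ z, HORegular D z → c * D.theta 1 z ≤ D.rescaled G z := by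
  obtain ⟨a, ha, ha1, B, hB, hsub⟩ := D.exists_barrier_sub
  set M := 2⁻¹ * Real.exp (-B * D.R.card) with hM
  refine ⟨M * a ^ (Rpos0 D).card, by positivity, fun z hz => ?_⟩
  have hpos := D.pos_of_radialOp_le
    (f := fun z => 1 * D.rescaled G z - M * D.barrier a B z)
    (f' := fun z => 1 * D.radialOp (D.rescaled G) z -
      M * (D.barrier a B z * (D.thetaLogDeriv a z - B * D.invSumDecay z)))
    (((D.continuous_rescaled (continuous_of_isOpdamR hG)).const_mul 1).sub
      ((D.continuous_barrier a B).const_mul M)) ?_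
    (fun z hz => ((D.hasRadialDerivAt_rescaled hG hz).const_mul 1).sub
      ((D.hasRadialDerivAt_barrier ha.le B z).const_mul M))
    (fun z hz => ?_) hz
  · have h1 : a ^ (Rpos0 D).card * D.theta 1 z ≤ D.barrier a B z := by
      refine (D.pow_mul_theta_le ha ha1 z).trans ?_
      refine le_mul_of_one_le_right (D.theta_pos ha.le z).le (Real.one_le_exp ?_)
      exact mul_nonneg hB (D.invSum_nonneg z)
    have h2 := mul_le_mul_of_nonneg_left h1 (by positivity : 0 ≤ M)
    simp only [one_mul] at hpos
    linarith
  · simp only [barrier_zero, rescaled_zero hG, hM]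
    rw [mul_assoc, ← Real.exp_add]
    simp
    norm_num
  · rw [D.radialOp_sub]
    exact sub_le_sub_left (mul_le_mul_of_nonneg_left (hsub z hz) (by positivity)) _

end HOData

/-! ### Radial asymptotics -/

namespace HOData

variable (D : HOData E)

lemma Separated.regular {D : HOData E} {m : ℝ} {z : E} (hm : 0 < m) (h : D.Separated m z) :
    HORegular D z := fun γ hγ => abs_pos.1 (hm.trans_le (h γ hγ))

lemma Separated.rRefl {D : HOData E} {m : ℝ} {α z : E} (hα : α ∈ D.R) (h : D.Separated m z) :
    D.Separated m (rRefl α z) := fun γ hγ => by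
  rw [inner_rRefl]
  exact h _ (D.refl_mem α hα γ hγ)

lemma Separated.smul {D : HOData E} {m t : ℝ} {z : E} (ht : 0 < t) (h : D.Separated m z) :
    D.Separated (t * m) (t • z) := fun γ hγ => by
  rw [abs_inner_smul γ z ht]
  exact mul_le_mul_of_nonneg_left (h γ hγ) ht.le

lemma inner_smul_pos_iff (γ z : E) {t : ℝ} (ht : 0 < t) : 0 < ⟪γ, t • z⟫ ↔ 0 < ⟪γ, z⟫ := by
  rw [inner_smul_right, mul_pos_iff_of_pos_left ht]

lemma posCount_smul {t : ℝ} (ht : 0 < t) (z : E) : D.posCount (t • z) = D.posCount z := by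
  simp only [posCount, inner_smul_pos_iff _ z ht]

lemma max_mul_theta_rRefl_le {α : E} (hα : α ∈ D.Rpos) (z : E) :
    max ⟪α, z⟫ 0 * D.theta 1 (rRefl α z) ≤ 2 * D.theta 1 z := by
  have h0 := D.theta_pos zero_le_one z
  have h1 := D.theta_pos zero_le_one (rRefl α z)
  rcases le_or_gt ⟪α, z⟫ 0 with h | h
  · rw [max_eq_right h]
    linarith
  · obtain ⟨β, hβ, hβα⟩ := D.exists_indivisible hα
    obtain ⟨hb, hab⟩ := inner_indivisible hβα h
    have hθ := D.theta_rRefl_mul_le hα h hβ hβα zero_le_one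
    rw [max_eq_left h.le]
    nlinarith

lemma exists_kernel_mul_theta_le : ∃ C : ℝ, 0 ≤ C ∧ ∀ α ∈ D.Rpos, ∀ z, HORegular D z →
    ∀ m : ℝ, 0 < 1 + m → 1 + m ≤ 1 + |⟪α, z⟫| →
      bernoulliKernel |⟪α, z⟫| * (D.theta 1 (rRefl α z) + D.theta 1 z) ≤
        C / (1 + m) ^ 2 * D.theta 1 z := by
  obtain ⟨c, hc, hθ⟩ := D.exists_theta_rRefl_le
  set N := (Rpos0 D).card with hN
  obtain ⟨C, hC, hb⟩ := exists_bernoulliKernel_mul_pow_le (N + 2)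
  refine ⟨2 * (1 + c) ^ N * C, by positivity, fun α hα z hz m hm hms => ?_⟩
  have hs := D.abs_inner_pos hα hz
  have h0 := D.theta_pos zero_le_one z
  have h1 := hθ 1 zero_le_one α (D.pos_subset hα) z
  have hb0 := bernoulliKernel_pos hs
  have hb1 := hb _ hs
  set s := |⟪α, z⟫| with hsdef
  rw [one_mul] at h1
  have h2 : (1 + c * s) ^ N ≤ (1 + c) ^ N * (1 + s) ^ N := by
    rw [← mul_pow]
    exact pow_le_pow_left₀ (by positivity) (by nlinarith) N
  have h3 : 1 ≤ (1 + c) ^ N * (1 + s) ^ N := by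
    rw [← mul_pow]
    exact one_le_pow₀ (by nlinarith)
  have h4 : D.theta 1 (rRefl α z) + D.theta 1 z ≤
      2 * ((1 + c) ^ N * (1 + s) ^ N) * D.theta 1 z := by nlinarith
  have h5 : (1 + m) ^ 2 ≤ (1 + s) ^ 2 := pow_le_pow_left₀ hm.le hms 2
  rw [div_mul_eq_mul_div, le_div_iff₀ (by positivity)]
  calc bernoulliKernel s * (D.theta 1 (rRefl α z) + D.theta 1 z) * (1 + m) ^ 2
      ≤ bernoulliKernel s * (2 * ((1 + c) ^ N * (1 + s) ^ N) * D.theta 1 z) * (1 + s) ^ 2 :=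
        mul_le_mul (mul_le_mul_of_nonneg_left h4 hb0.le) h5 (by positivity) (by positivity)
    _ = 2 * (1 + c) ^ N * (bernoulliKernel s * (1 + s) ^ (N + 2)) * D.theta 1 z := by ring
    _ ≤ _ := by gcongr

variable {D} {f : E → ℝ} {A : ℝ}

lemma abs_kernel_mul_le (hf : ∀ z, HORegular D z → |f z| ≤ A * D.theta 1 z) {α z : E}
    (hα : α ∈ D.Rpos) (hz : HORegular D z) :
    |bernoulliKernel |⟪α, z⟫| * (f (rRefl α z) - f z)| ≤
      A * (bernoulliKernel |⟪α, z⟫| * (D.theta 1 (rRefl α z) + D.theta 1 z)) := by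
  have hb0 := bernoulliKernel_pos (D.abs_inner_pos hα hz)
  have h1 := hf _ (D.regular_rRefl (D.pos_subset hα) hz)
  have h2 := hf z hz
  have h3 := abs_sub (f (rRefl α z)) (f z)
  rw [abs_mul, abs_of_pos hb0]
  calc bernoulliKernel |⟪α, z⟫| * |f (rRefl α z) - f z|
      ≤ bernoulliKernel |⟪α, z⟫| * (A * D.theta 1 (rRefl α z) + A * D.theta 1 z) :=
        mul_le_mul_of_nonneg_left (by linarith) hb0.le
    _ = _ := by ring

lemma abs_max_mul_le (hA : 0 ≤ A) (hf : ∀ z, HORegular D z → |f z| ≤ A * D.theta 1 z)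
    {α z : E} (hα : α ∈ D.Rpos) (hz : HORegular D z) :
    |max ⟪α, z⟫ 0 * f (rRefl α z)| ≤ 2 * A * D.theta 1 z := by
  have h1 := hf _ (D.regular_rRefl (D.pos_subset hα) hz)
  have h2 := D.max_mul_theta_rRefl_le hα z
  have h3 := le_max_right ⟪α, z⟫ 0
  rw [abs_mul, abs_of_nonneg h3]
  nlinarith [mul_le_mul_of_nonneg_left h1 h3]

lemma abs_sum_k_mul_le (D : HOData E) {S : Finset E} (hS : S ⊆ D.Rpos) {g : E → ℝ} {M : ℝ}
    (hM : 0 ≤ M) (h : ∀ α ∈ S, |g α| ≤ M) :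
    |∑ α ∈ S, D.k α * g α| ≤ (∑ α ∈ D.Rpos, D.k α) * M := by
  refine (Finset.abs_sum_le_sum_abs _ _).trans ?_
  have hk : ∀ α ∈ D.Rpos, 0 ≤ D.k α := fun _ hα => (D.k_pos_of_pos hα).le
  have h1 : ∑ α ∈ S, |D.k α * g α| ≤ ∑ α ∈ S, D.k α * M :=
    Finset.sum_le_sum fun α hα => by
      rw [abs_mul, abs_of_nonneg (hk α (hS hα))]
      exact mul_le_mul_of_nonneg_left (h α hα) (hk α (hS hα))
  rw [← Finset.sum_mul] at h1
  exact h1.trans (mul_le_mul_of_nonneg_right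
    (Finset.sum_le_sum_of_subset_of_nonneg hS fun α hα _ => hk α hα) hM)

lemma sum_k_nonneg (D : HOData E) : 0 ≤ ∑ α ∈ D.Rpos, D.k α :=
  Finset.sum_nonneg fun _ hα => (D.k_pos_of_pos hα).le

lemma exists_abs_radialOp_le (hA : 0 ≤ A)
    (hf : ∀ z, HORegular D z → |f z| ≤ A * D.theta 1 z) :
    ∃ C : ℝ, 0 ≤ C ∧ ∀ z, HORegular D z → |D.radialOp f z| ≤ C * D.theta 1 z := by
  obtain ⟨C, hC, hker⟩ := D.exists_kernel_mul_theta_le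
  have hK := D.sum_k_nonneg
  refine ⟨(∑ α ∈ D.Rpos, D.k α) * (2 * A + A * C), by positivity, fun z hz => ?_⟩
  have h0 := D.theta_pos zero_le_one z
  rw [mul_assoc]
  refine D.abs_sum_k_mul_le subset_rfl (by positivity) fun α hα => ?_
  refine (abs_add_le _ _).trans ?_
  rw [add_mul]
  refine add_le_add (abs_max_mul_le hA hf hα hz) ((abs_kernel_mul_le hf hα hz).trans ?_)
  rw [mul_assoc]
  refine mul_le_mul_of_nonneg_left ?_ hA
  simpa using hker α hα z hz 0 (by simp) (by simp)

variable (D) in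
/-- The positive roots at `z` whose reflections lower `posCount` by exactly one. -/
def descents (z : E) : Finset E :=
  D.Rpos.filter fun α => 0 < ⟪α, z⟫ ∧ D.posCount (rRefl α z) + 1 = D.posCount z

variable (D) in
/-- The dominant part of the radial operator. -/
def leadingPart (f : E → ℝ) (z : E) : ℝ :=
  ∑ α ∈ D.descents z, D.k α * (⟪α, z⟫ * f (rRefl α z))

lemma descents_subset (z : E) : D.descents z ⊆ D.Rpos := Finset.filter_subset _ _

lemma mem_descents {α z : E} : α ∈ D.descents z ↔
    α ∈ D.Rpos ∧ 0 < ⟪α, z⟫ ∧ D.posCount (rRefl α z) + 1 = D.posCount z := by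
  simp [descents]

lemma descents_smul {t : ℝ} (ht : 0 < t) (z : E) : D.descents (t • z) = D.descents z := by
  ext α
  simp only [mem_descents, rRefl_smul, D.posCount_smul ht, inner_smul_pos_iff _ z ht]

lemma exists_abs_radialOp_sub_leadingPart_le (hA : 0 ≤ A)
    (hf : ∀ z, HORegular D z → |f z| ≤ A * D.theta 1 z) :
    ∃ C : ℝ, 0 ≤ C ∧ ∀ m : ℝ, 0 < m → ∀ z, D.Separated m z →
      |D.radialOp f z - D.leadingPart f z| ≤
        C * (((D.posCount z - 1 : ℕ) : ℝ) / m + 1 / m ^ 2) * D.theta 1 z := by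
  obtain ⟨C, hC, hker⟩ := D.exists_kernel_mul_theta_le
  have hK := D.sum_k_nonneg
  refine ⟨(∑ α ∈ D.Rpos, D.k α) * (2 * A + A * C), by positivity, fun m hm z hsep => ?_⟩
  have hz := hsep.regular hm
  have h0 := D.theta_pos zero_le_one z
  have e : D.radialOp f z - D.leadingPart f z = ∑ α ∈ D.Rpos, D.k α *
      ((if 0 < ⟪α, z⟫ ∧ D.posCount (rRefl α z) + 1 = D.posCount z then 0
        else max ⟪α, z⟫ 0 * f (rRefl α z)) +
      bernoulliKernel |⟪α, z⟫| * (f (rRefl α z) - f z)) := by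
    rw [radialOp, leadingPart, descents, Finset.sum_filter, ← Finset.sum_sub_distrib]
    refine Finset.sum_congr rfl fun α _ => ?_
    split_ifs with h
    · rw [max_eq_left h.1.le]
      ring
    · ring
  rw [e, mul_assoc, mul_assoc]
  refine D.abs_sum_k_mul_le subset_rfl (by positivity) fun α hα => ?_
  refine (abs_add_le _ _).trans ?_
  have hn : 0 ≤ ((D.posCount z - 1 : ℕ) : ℝ) / m := by positivity
  have t1 : |if 0 < ⟪α, z⟫ ∧ D.posCount (rRefl α z) + 1 = D.posCount z then 0
        else max ⟪α, z⟫ 0 * f (rRefl α z)| ≤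
      2 * A * (((D.posCount z - 1 : ℕ) : ℝ) / m * D.theta 1 z) := by
    split_ifs with h
    · rw [abs_zero]
      positivity
    · rcases le_or_gt ⟪α, z⟫ 0 with hs | hs
      · rw [max_eq_right hs, zero_mul, abs_zero]
        positivity
      · obtain ⟨β, hβ, hβα⟩ := D.exists_indivisible hα
        obtain ⟨hb, hab⟩ := inner_indivisible hβα hs
        obtain ⟨h2, hgain⟩ :=
          (D.posCount_rRefl_or hz hα hs hβ hβα).resolve_left fun h' => h ⟨hs, h'⟩
        have hg := hgain m hm.le hsep
        have h1 := hf _ (D.regular_rRefl (D.pos_subset hα) hz)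
        have hr := D.theta_pos zero_le_one (rRefl α z)
        have hn1 : (1 : ℝ) ≤ ((D.posCount z - 1 : ℕ) : ℝ) := by
          exact_mod_cast (by omega : 1 ≤ D.posCount z - 1)
        rw [max_eq_left hs.le, abs_mul, abs_of_pos hs]
        calc ⟪α, z⟫ * |f (rRefl α z)| ≤ (2 * ⟪β, z⟫) * (A * D.theta 1 (rRefl α z)) :=
              mul_le_mul hab h1 (abs_nonneg _) (by positivity)
          _ = 2 * A * (1 / m * (D.theta 1 (rRefl α z) * ⟪β, z⟫ * m)) := by field_simp
          _ ≤ 2 * A * (1 / m * D.theta 1 z) := by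
              gcongr
              refine le_trans ?_ hg
              gcongr <;> linarith
          _ ≤ _ := by gcongr
  have t2 : |bernoulliKernel |⟪α, z⟫| * (f (rRefl α z) - f z)| ≤
      A * C * (1 / m ^ 2 * D.theta 1 z) := by
    refine (abs_kernel_mul_le hf hα hz).trans ?_
    rw [mul_assoc]
    refine mul_le_mul_of_nonneg_left ?_ hA
    refine (hker α hα z hz m (by positivity) ?_).trans ?_
    · linarith [hsep α (D.pos_subset hα)]
    · have : C / (1 + m) ^ 2 ≤ C * (1 / m ^ 2) := by
        rw [mul_one_div]
        gcongr
        linarith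
      calc _ ≤ C * (1 / m ^ 2) * D.theta 1 z := mul_le_mul_of_nonneg_right this h0.le
        _ = _ := by ring
  have p1 : 0 ≤ 2 * A * (1 / m ^ 2 * D.theta 1 z) := by positivity
  have p2 : 0 ≤ A * C * (((D.posCount z - 1 : ℕ) : ℝ) / m * D.theta 1 z) := by positivity
  nlinarith

/-- Growth of the reference product along a ray. -/
lemma theta_smul_le {z : E} (hsep : D.Separated 1 z) {s t : ℝ} (hs : 1 ≤ s) (ht : 1 ≤ t) :
    D.theta 1 (s • z) ≤ 2 ^ (Rpos0 D).card * (s / t) ^ D.posCount z * D.theta 1 (t • z) := by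
  have e : (s / t) ^ D.posCount z = ∏ β ∈ Rpos0 D, if 0 < ⟪β, z⟫ then s / t else 1 := by
    rw [← Finset.prod_filter, Finset.prod_const, posCount, ← Finset.card_filter]
  rw [e, theta, theta, ← Finset.prod_const, ← Finset.prod_mul_distrib,
    ← Finset.prod_mul_distrib]
  refine Finset.prod_le_prod (fun β _ => ?_) fun β hβ => ?_
  · have := le_max_right ⟪β, s • z⟫ 0
    positivity
  · have hs0 : 0 < s := by linarith
    have ht0 : 0 < t := by linarith
    rw [max_inner_smul β z hs0, max_inner_smul β z ht0]
    have h1 := hsep β (D.pos_subset (D.pos_of_mem_Rpos0 hβ))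
    split_ifs with h
    · rw [abs_of_pos h] at h1
      rw [max_eq_left h.le]
      have : 2 * (s / t) * (1 + 1 * (t * ⟪β, z⟫)) = 2 * (s / t) + 2 * s * ⟪β, z⟫ := by
        field_simp
      rw [this]
      have : 0 ≤ s / t := by positivity
      nlinarith
    · rw [max_eq_right (not_lt.1 h)]
      norm_num

lemma hasRadialDerivAt_leadingPart
    (hd : ∀ z, HORegular D z → HasRadialDerivAt f (D.radialOp f z) z) {z : E}
    (hz : HORegular D z) :
    HasRadialDerivAt (D.leadingPart f) (∑ α ∈ D.descents z, D.k α *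
      (⟪α, z⟫ * (f (rRefl α z) + D.radialOp f (rRefl α z)))) z := by
  have h1 : HasDerivAt (fun t : ℝ => ∑ α ∈ D.descents z,
      D.k α * ((t * ⟪α, z⟫) * f (t • rRefl α z))) (∑ α ∈ D.descents z, D.k α *
      (⟪α, z⟫ * (f (rRefl α z) + D.radialOp f (rRefl α z)))) 1 := by
    refine HasDerivAt.fun_sum fun α hα => ?_
    have hα' := D.pos_subset (descents_subset z hα)
    have h2 : HasDerivAt (fun t : ℝ => t * ⟪α, z⟫) (1 * ⟪α, z⟫) 1 :=
      (hasDerivAt_id 1).mul_const _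
    refine ((h2.mul (hd _ (D.regular_rRefl hα' hz))).const_mul (D.k α)).congr_deriv ?_
    rw [one_smul]
    ring
  refine h1.congr_of_eventuallyEq ?_
  filter_upwards [lt_mem_nhds (zero_lt_one (α := ℝ))] with t ht
  rw [leadingPart, descents_smul ht]
  exact Finset.sum_congr rfl fun α _ => by rw [rRefl_smul, inner_smul_right]

lemma abs_leadingPart_le (hA : 0 ≤ A) (hf : ∀ z, HORegular D z → |f z| ≤ A * D.theta 1 z)
    {z : E} (hz : HORegular D z) :
    |D.leadingPart f z| ≤ (∑ α ∈ D.Rpos, D.k α) * (2 * A * D.theta 1 z) := by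
  have h0 := D.theta_pos zero_le_one z
  refine D.abs_sum_k_mul_le (descents_subset z) (by positivity) fun α hα => ?_
  have h := abs_max_mul_le hA hf (descents_subset z hα) hz
  rwa [max_eq_left (mem_descents.1 hα).2.1.le] at h

/-- Integration along a ray of a function whose radial derivative is small relative to the
reference product. -/
lemma abs_le_of_radialDeriv_le {g g' : E → ℝ} {C₁ C₂ : ℝ} (hC₁ : 0 ≤ C₁) (hC₂ : 0 ≤ C₂) (p : ℕ)
    (hd : ∀ z, HORegular D z → HasRadialDerivAt g (g' z) z)
    (hg : ∀ z, HORegular D z → |g z| ≤ C₂ * D.theta 1 z)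
    (hg' : ∀ m : ℝ, 1 ≤ m → ∀ z, D.Separated m z → D.posCount z = p + 1 →
      |g' z| ≤ C₁ * (p / m + 1 / m ^ 2) * D.theta 1 z)
    (m : ℝ) (hm : 1 ≤ m) (z : E) (hsep : D.Separated m z) (hn : D.posCount z = p + 1) :
    |g z| ≤ 2 ^ (Rpos0 D).card * (C₂ + C₁) * ((p + 1) / m) * D.theta 1 z := by
  have hm0 : 0 < m := by linarith
  set y := m⁻¹ • z with hy
  have hzy : m • y = z := by rw [hy, smul_smul, mul_inv_cancel₀ hm0.ne', one_smul]
  have hsy : D.Separated 1 y := by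
    have := hsep.smul (inv_pos.2 hm0)
    rwa [inv_mul_cancel₀ hm0.ne'] at this
  have hny : D.posCount y = p + 1 := by rw [hy, D.posCount_smul (inv_pos.2 hm0), hn]
  have hreg : ∀ s : ℝ, 1 ≤ s → HORegular D (s • y) := fun s hs =>
    D.regular_smul (by linarith) (hsy.regular one_pos)
  set M := 2 ^ (Rpos0 D).card * D.theta 1 z with hM
  have h0 := D.theta_pos zero_le_one z
  have hM0 : 0 < M := by positivity
  have hθ : ∀ s : ℝ, 1 ≤ s → D.theta 1 (s • y) ≤ M * (s / m) ^ (p + 1) := fun s hs => by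
    have := theta_smul_le hsy hs hm
    rw [hny, hzy] at this
    rw [hM]
    linarith
  have hder : ∀ s : ℝ, 1 ≤ s → HasDerivAt (fun s : ℝ => g (s • y)) (g' (s • y) / s) s :=
    fun s hs => (hd _ (hreg s hs)).hasDerivAt (by linarith)
  have hB : ∀ s : ℝ, 1 ≤ s → HasDerivAt
      (fun s : ℝ => C₂ * M / m + C₁ * M * ((p / m ^ 2) * s - s⁻¹ / m - p / m ^ 2 + 1 / m))
      (C₁ * M * (p / m ^ 2 + 1 / s ^ 2 / m)) s := by
    intro s hs
    have hs0 : s ≠ 0 := by linarith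
    have h1 := ((((hasDerivAt_id s).const_mul ((p : ℝ) / m ^ 2)).sub
      ((hasDerivAt_inv hs0).div_const m)).sub_const ((p : ℝ) / m ^ 2)).add_const (1 / m)
    refine ((h1.const_mul (C₁ * M)).const_add (C₂ * M / m)).congr_deriv ?_
    field_simp
    ring
  have key := image_norm_le_of_norm_deriv_right_le_deriv_boundary'
    (f := fun s : ℝ => g (s • y)) (f' := fun s => g' (s • y) / s) (a := 1) (b := m)
    (fun s hs => (hder s hs.1).continuousAt.continuousWithinAt)
    (fun s hs => (hder s hs.1).hasDerivWithinAt)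
    (B := fun s : ℝ => C₂ * M / m + C₁ * M * ((p / m ^ 2) * s - s⁻¹ / m - p / m ^ 2 + 1 / m))
    (B' := fun s => C₁ * M * (p / m ^ 2 + 1 / s ^ 2 / m)) ?_
    (fun s hs => (hB s hs.1).continuousAt.continuousWithinAt)
    (fun s hs => (hB s hs.1).hasDerivWithinAt) (fun s hs => ?_) (Set.right_mem_Icc.2 hm)
  · rw [Real.norm_eq_abs] at key
    rw [hzy] at key
    refine key.trans ?_
    have e : (p / m ^ 2) * m - m⁻¹ / m - p / m ^ 2 + 1 / m ≤ ((p : ℝ) + 1) / m := by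
      have : (p / m ^ 2) * m = (p : ℝ) / m := by field_simp
      rw [this, add_div]
      have h1 : 0 ≤ (p : ℝ) / m ^ 2 := by positivity
      have h2 : 0 ≤ m⁻¹ / m := by positivity
      linarith
    have e1 := mul_le_mul_of_nonneg_left e (by positivity : 0 ≤ C₁ * M)
    have e2 : C₂ * M / m ≤ C₂ * M * ((p + 1) / m) := by
      rw [mul_div_assoc]
      calc C₂ * (M / m) = C₂ * M * (1 / m) := by ring
        _ ≤ _ := by
          gcongr
          linarith [(Nat.cast_nonneg p : (0 : ℝ) ≤ p)]
    calc _ ≤ C₂ * M * ((p + 1) / m) + C₁ * M * ((p + 1) / m) := add_le_add e2 e1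
      _ = _ := by rw [hM]; ring
  · have h1 := hθ 1 le_rfl
    have h2 : (1 / m) ^ (p + 1) ≤ 1 / m :=
      pow_le_of_le_one (by positivity) ((div_le_one hm0).2 hm) (by omega)
    rw [Real.norm_eq_abs]
    refine (hg _ (hreg 1 le_rfl)).trans ?_
    calc C₂ * D.theta 1 ((1 : ℝ) • y) ≤ C₂ * (M * (1 / m)) := by
          gcongr
          exact h1.trans (by gcongr)
      _ = _ := by ring
  · have hs1 := hs.1
    have hs0 : 0 < s := by linarith
    have hsm : s / m ≤ 1 := (div_le_one hm0).2 hs.2.le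
    have hsm0 : 0 ≤ s / m := by positivity
    have hb := hg' s hs1 (s • y) (by simpa using hsy.smul hs0)
      (by rw [D.posCount_smul hs0, hny])
    have hp1 : (p : ℝ) * (s / m) ^ (p + 1) ≤ p * (s / m) ^ 2 := by
      rcases Nat.eq_zero_or_pos p with rfl | hp
      · simp
      · exact mul_le_mul_of_nonneg_left
          (pow_le_pow_of_le_one hsm0 hsm (by omega)) (by positivity)
    have hp2 : (s / m) ^ (p + 1) ≤ s / m := pow_le_of_le_one hsm0 hsm (by omega)
    rw [Real.norm_eq_abs, abs_div, abs_of_pos hs0, div_le_iff₀ hs0]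
    refine hb.trans ?_
    calc C₁ * (p / s + 1 / s ^ 2) * D.theta 1 (s • y)
        ≤ C₁ * (p / s + 1 / s ^ 2) * (M * (s / m) ^ (p + 1)) := by
          gcongr
          exact hθ s hs1
      _ = C₁ * M * ((p * (s / m) ^ (p + 1)) / s + 1 / s ^ 2 * (s / m) ^ (p + 1)) := by ring
      _ ≤ C₁ * M * ((p * (s / m) ^ 2) / s + 1 / s ^ 2 * (s / m)) := by gcongr
      _ = _ := by
          field_simp

/-- Away from the walls, the radial operator acts almost as multiplication by `posCount`. -/
lemma exists_abs_radialOp_sub_posCount_mul_le (hA : 0 ≤ A)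
    (hf : ∀ z, HORegular D z → |f z| ≤ A * D.theta 1 z)
    (hd : ∀ z, HORegular D z → HasRadialDerivAt f (D.radialOp f z) z) (n : ℕ) :
    ∃ C : ℝ, 0 ≤ C ∧ ∀ m : ℝ, 1 ≤ m → ∀ z, D.Separated m z → D.posCount z = n →
      |D.radialOp f z - n * f z| ≤ C * (n / m + 1 / m ^ 2) * D.theta 1 z := by
  obtain ⟨C₀, hC₀, hlead⟩ := exists_abs_radialOp_sub_leadingPart_le hA hf
  have hK := D.sum_k_nonneg
  set K := ∑ α ∈ D.Rpos, D.k α with hKdef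
  induction n with
  | zero =>
    refine ⟨C₀, hC₀, fun m hm z hsep hn => ?_⟩
    have h1 := hlead m (by linarith) z hsep
    have h2 : D.leadingPart f z = 0 := by
      rw [leadingPart, Finset.eq_empty_of_forall_notMem (s := D.descents z), Finset.sum_empty]
      intro α hα
      have := (mem_descents.1 hα).2.2
      omega
    simpa [h2, hn] using h1
  | succ p ih =>
    obtain ⟨Cp, hCp, ihp⟩ := ih
    have hradial := abs_le_of_radialDeriv_le (D := D) (p := p)
      (g := fun z => ((p + 1 : ℕ) : ℝ) * f z - D.leadingPart f z)
      (g' := fun z => ((p + 1 : ℕ) : ℝ) * D.radialOp f z - ∑ α ∈ D.descents z, D.k α *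
        (⟪α, z⟫ * (f (rRefl α z) + D.radialOp f (rRefl α z))))
      (C₁ := (p + 1) * C₀ + K * (2 * Cp)) (C₂ := (p + 1) * A + K * (2 * A))
      (by positivity) (by positivity)
      (fun z hz => ((hd z hz).const_mul _).sub (hasRadialDerivAt_leadingPart hd hz))
      (fun z hz => ?_) (fun m hm z hsep hn => ?_)
    · refine ⟨C₀ + 2 ^ (Rpos0 D).card *
        ((p + 1) * A + K * (2 * A) + ((p + 1) * C₀ + K * (2 * Cp))), by positivity,
        fun m hm z hsep hn => ?_⟩
      have hm0 : 0 < m := by linarith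
      have h0 := D.theta_pos zero_le_one z
      have h1 := hradial m hm z hsep hn
      have h2 := hlead m hm0 z hsep
      rw [hn, Nat.add_sub_cancel] at h2
      have e : D.radialOp f z - ((p + 1 : ℕ) : ℝ) * f z =
          (D.radialOp f z - D.leadingPart f z) -
            (((p + 1 : ℕ) : ℝ) * f z - D.leadingPart f z) := by ring
      rw [e]
      refine (abs_sub _ _).trans ((add_le_add h2 h1).trans ?_)
      push_cast
      rw [add_mul C₀, add_mul (C₀ * _)]
      refine add_le_add ?_ ?_
      · gcongr
        linarith
      · gcongr
        have : 0 ≤ 1 / m ^ 2 := by positivity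
        linarith
    · have h1 := hf z hz
      have h2 := abs_leadingPart_le hA hf hz
      refine (abs_sub _ _).trans ?_
      rw [abs_mul, Nat.abs_cast]
      push_cast
      have := mul_le_mul_of_nonneg_left h1 (by positivity : (0 : ℝ) ≤ p + 1)
      nlinarith
    · have hm0 : 0 < m := by linarith
      have hz := hsep.regular hm0
      have h0 := D.theta_pos zero_le_one z
      have h2 := hlead m hm0 z hsep
      rw [hn, Nat.add_sub_cancel] at h2
      have h3 : |∑ α ∈ D.descents z,
          D.k α * (⟪α, z⟫ * (D.radialOp f (rRefl α z) - p * f (rRefl α z)))| ≤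
          K * (2 * Cp * (p / m + 1 / m ^ 2) * D.theta 1 z) := by
        refine D.abs_sum_k_mul_le (descents_subset z) (by positivity) fun α hα => ?_
        obtain ⟨hα1, hα2, hα3⟩ := mem_descents.1 hα
        have h4 := ihp m hm _ (hsep.rRefl (D.pos_subset hα1)) (by omega)
        have h5 := D.max_mul_theta_rRefl_le hα1 z
        rw [max_eq_left hα2.le] at h5
        rw [abs_mul, abs_of_pos hα2]
        calc _ ≤ ⟪α, z⟫ * (Cp * (p / m + 1 / m ^ 2) * D.theta 1 (rRefl α z)) :=
              mul_le_mul_of_nonneg_left h4 hα2.le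
          _ = Cp * (p / m + 1 / m ^ 2) * (⟪α, z⟫ * D.theta 1 (rRefl α z)) := by ring
          _ ≤ Cp * (p / m + 1 / m ^ 2) * (2 * D.theta 1 z) := by gcongr
          _ = _ := by ring
      have e : ((p + 1 : ℕ) : ℝ) * D.radialOp f z - ∑ α ∈ D.descents z, D.k α *
          (⟪α, z⟫ * (f (rRefl α z) + D.radialOp f (rRefl α z))) =
          (p + 1) * (D.radialOp f z - D.leadingPart f z) - ∑ α ∈ D.descents z,
            D.k α * (⟪α, z⟫ * (D.radialOp f (rRefl α z) - p * f (rRefl α z))) := by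
        rw [mul_sub, leadingPart, Finset.mul_sum, sub_sub, ← Finset.sum_add_distrib]
        push_cast
        congr 1
        exact Finset.sum_congr rfl fun α _ => by ring
      rw [e]
      refine (abs_sub _ _).trans ?_
      rw [abs_mul, abs_of_pos (by positivity : (0 : ℝ) < p + 1)]
      calc _ ≤ (p + 1) * (C₀ * (p / m + 1 / m ^ 2) * D.theta 1 z) +
            K * (2 * Cp * (p / m + 1 / m ^ 2) * D.theta 1 z) := by gcongr
        _ = _ := by ring

end HOData

/-! ### The symmetrized function on the positive chamber -/

namespace HOData

variable {D : HOData E}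

variable (D) in
/-- The Weyl-invariant product of `1 + |(β, z)|` over the positive indivisible roots. -/
def absTheta (z : E) : ℝ := ∏ β ∈ Rpos0 D, (1 + |⟪β, z⟫|)

lemma absTheta_weyl (w : weylGroup D) (z : E) : D.absTheta (w.1 z) = D.absTheta z := by
  refine weyl_invariant D D.absTheta (fun α hα z => ?_) w z
  rw [absTheta, absTheta, ← D.prod_foldRefl hα]
  refine Finset.prod_congr rfl fun β _ => ?_
  rw [D.inner_foldRefl_rRefl hα, flipVal]
  split_ifs
  · rfl
  · rw [abs_neg]

lemma theta_mul_le_absTheta {m : ℝ} {z : E} (hsep : D.Separated m z)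
    (h : D.posCount z ≠ (Rpos0 D).card) : D.theta 1 z * (1 + m) ≤ D.absTheta z := by
  obtain ⟨β, hβ, hβz⟩ : ∃ β ∈ Rpos0 D, ⟪β, z⟫ ≤ 0 := by
    by_contra hc
    push Not at hc
    refine h ?_
    rw [posCount, Finset.sum_congr rfl fun β hβ => if_pos (hc β hβ), Finset.sum_const,
      smul_eq_mul, mul_one]
  rw [theta, absTheta, ← Finset.mul_prod_erase _ _ hβ,
    ← Finset.mul_prod_erase _ (fun β => 1 + |⟪β, z⟫|) hβ, max_eq_right hβz, mul_zero, add_zero,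
    one_mul, mul_comm]
  refine mul_le_mul ?_ ?_ ?_ (by positivity)
  · linarith [hsep β (D.pos_subset (D.pos_of_mem_Rpos0 hβ))]
  · refine Finset.prod_le_prod (fun δ _ => ?_) fun δ _ => ?_
    · have := le_max_right ⟪δ, z⟫ 0
      positivity
    · have := max_le (le_abs_self ⟪δ, z⟫) (abs_nonneg _)
      linarith
  · refine Finset.prod_nonneg fun δ _ => ?_
    have := le_max_right ⟪δ, z⟫ 0
    positivity

lemma theta_eq_absTheta {x : E} (hx : x ∈ posChamber D) : D.theta 1 x = D.absTheta x :=
  Finset.prod_congr rfl fun β hβ => by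
    have := hx β (D.pos_of_mem_Rpos0 hβ)
    rw [one_mul, max_eq_left this.le, abs_of_pos this]

lemma separated_of_posChamber {x : E} (hx : x ∈ posChamber D) {m : ℝ}
    (hm : ∀ α ∈ D.Rpos, m ≤ ⟪α, x⟫) : D.Separated m x := fun γ hγ => by
  rcases D.pos_or_neg γ hγ with h | h
  · rw [abs_of_pos (hx γ h)]
    exact hm γ h
  · have h1 := hx _ h
    have h2 := hm _ h
    rw [← abs_neg, ← inner_neg_left, abs_of_pos h1]
    exact h2

lemma separated_weyl (w : weylGroup D) {m : ℝ} {z : E} (hz : D.Separated m z) :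
    D.Separated m (w.1 z) := by
  rw [weyl_invariant D (D.Separated m) fun α hα z => ?_]
  · exact hz
  · refine propext ⟨fun h => ?_, fun h => h.rRefl hα⟩
    simpa [rRefl_rRefl (D.root_ne_zero α hα)] using h.rRefl hα

lemma regular_of_posChamber {x : E} (hx : x ∈ posChamber D) : HORegular D x := fun γ hγ => by
  rcases D.pos_or_neg γ hγ with h | h
  · exact (hx γ h).ne'
  · have := hx _ h
    rw [inner_neg_left] at this
    linarith

lemma one_le_theta (z : E) : 1 ≤ D.theta 1 z :=
  Finset.one_le_prod fun β _ => by linarith [le_max_right ⟪β, z⟫ 0]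

/-- Trade a factor `1 + m` against a bound by a quantity that is smaller by that factor. -/
lemma mul_le_of_le_mul_of_mul_le {a S m K L X T : ℝ} (ha : 0 < a) (hS : 0 ≤ S) (hm : 0 ≤ m)
    (hK : 0 ≤ K) (hL : 0 ≤ L) (hX : X ≤ K * T) (hT : T * (1 + m) ≤ 2 * (S / a)) :
    X * (1 + m) ≤ (2 * (K / a) + 2 * (L / a)) * S := by
  have h1 : 0 ≤ L / a * S := by positivity
  have h2 : X * (1 + m) ≤ K * T * (1 + m) := mul_le_mul_of_nonneg_right hX (by linarith)
  have h3 : K * (T * (1 + m)) ≤ K * (2 * (S / a)) := mul_le_mul_of_nonneg_left hT hK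
  have h4 : K * (2 * (S / a)) = 2 * (K / a) * S := by ring
  linarith

/-- Trade a factor `1 + m` against a bound that decays like `1 / m`. -/
lemma mul_le_of_le_inv_mul {a S m K L n X T : ℝ} (ha : 0 < a) (hS : 0 ≤ S) (hm : 1 ≤ m)
    (hK : 0 ≤ K) (hL : 0 ≤ L) (hn : 0 ≤ n) (hT : 0 ≤ T) (hX : X ≤ L * (n / m + 1 / m ^ 2) * T)
    (hTS : T ≤ S / a) : X * (1 + m) ≤ (2 * (K / a) + 2 * (L * (n + 1) / a)) * S := by
  have hm0 : 0 < m := by linarith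
  have e : (n / m + 1 / m ^ 2) * (1 + m) ≤ 2 * (n + 1) := by
    have h1 : (1 + m) / m ≤ 2 := by
      rw [div_le_iff₀ hm0]
      linarith
    have h2 : n + 1 / m ≤ n + 1 := by
      rw [add_le_add_iff_left, div_le_iff₀ hm0]
      linarith
    calc (n / m + 1 / m ^ 2) * (1 + m) = (1 + m) / m * (n + 1 / m) := by
          field_simp
      _ ≤ 2 * (n + 1) := mul_le_mul h1 h2 (by positivity) zero_le_two
  have h1 : 0 ≤ K / a * S := by positivity
  have h2 : X * (1 + m) ≤ L * (n / m + 1 / m ^ 2) * T * (1 + m) :=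
    mul_le_mul_of_nonneg_right hX (by linarith)
  have h3 : (n / m + 1 / m ^ 2) * (1 + m) * T ≤ 2 * (n + 1) * (S / a) :=
    mul_le_mul e hTS hT (by positivity)
  have h4 := mul_le_mul_of_nonneg_left h3 hL
  have h5 : L * (2 * (n + 1) * (S / a)) = 2 * (L * (n + 1) / a) * S := by ring
  linarith

/-- Each term of the Weyl group average is an approximate eigenfunction, relative to the total. -/
lemma exists_abs_term_le [Fintype (weylGroup D)] {f : E → ℝ} {A a : ℝ} (ha : 0 < a)
    (hA : 0 ≤ A) (hlow : ∀ z, HORegular D z → a * D.theta 1 z ≤ f z)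
    (hup : ∀ z, HORegular D z → f z ≤ A * D.theta 1 z)
    (hd : ∀ z, HORegular D z → HasRadialDerivAt f (D.radialOp f z) z) :
    ∃ C : ℝ, 0 ≤ C ∧ ∀ x ∈ posChamber D, ∀ m : ℝ, 0 ≤ m → (∀ α ∈ D.Rpos, m ≤ ⟪α, x⟫) →
      ∀ w : weylGroup D, |D.radialOp f (w.1 x) - (Rpos0 D).card * f (w.1 x)| ≤
        C / (1 + m) * ∑ v : weylGroup D, f (v.1 x) := by
  have hf0 : ∀ z, HORegular D z → 0 < f z := fun z hz =>
    (mul_pos ha (D.theta_pos zero_le_one z)).trans_le (hlow z hz)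
  have hf : ∀ z, HORegular D z → |f z| ≤ A * D.theta 1 z := fun z hz => by
    rw [abs_of_pos (hf0 z hz)]
    exact hup z hz
  set N := (Rpos0 D).card with hN
  obtain ⟨C₁, hC₁, h₁⟩ := exists_abs_radialOp_le hA hf
  obtain ⟨C₂, hC₂, h₂⟩ := exists_abs_radialOp_sub_posCount_mul_le hA hf hd N
  refine ⟨2 * ((C₁ + N * A) / a) + 2 * (C₂ * (N + 1) / a), by positivity,
    fun x hx m hm hmx w => ?_⟩
  have hxr := regular_of_posChamber hx
  have hr : ∀ v : weylGroup D, HORegular D (v.1 x) := fun v => D.regular_weyl v hxr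
  set S := ∑ v : weylGroup D, f (v.1 x) with hS
  have hle : ∀ v : weylGroup D, f (v.1 x) ≤ S := fun v =>
    Finset.single_le_sum (f := fun v : weylGroup D => f (v.1 x))
      (fun v _ => (hf0 _ (hr v)).le) (Finset.mem_univ v)
  have hθS : ∀ v : weylGroup D, D.theta 1 (v.1 x) ≤ S / a := fun v => by
    rw [le_div_iff₀ ha]
    linarith [hlow _ (hr v), hle v]
  have hS0 : 0 < S := (hf0 _ (hr 1)).trans_le (hle 1)
  have hsep := separated_weyl w (separated_of_posChamber hx hmx)
  have hgen : |D.radialOp f (w.1 x) - N * f (w.1 x)| ≤ (C₁ + N * A) * D.theta 1 (w.1 x) := by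
    refine (abs_sub _ _).trans ?_
    rw [abs_mul, Nat.abs_cast, add_mul, mul_assoc]
    exact add_le_add (h₁ _ (hr w))
      (mul_le_mul_of_nonneg_left (hf _ (hr w)) (Nat.cast_nonneg N))
  rw [div_mul_eq_mul_div, le_div_iff₀ (by positivity)]
  have hK : 0 ≤ C₁ + N * A := by positivity
  have hL : 0 ≤ C₂ * (N + 1) := by positivity
  rcases lt_or_ge m 1 with hm1 | hm1
  · refine mul_le_of_le_mul_of_mul_le ha hS0.le hm hK hL hgen ?_
    have h1 := hθS w
    have h2 := D.theta_pos zero_le_one (w.1 x)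
    nlinarith
  · by_cases hcount : D.posCount (w.1 x) = N
    · exact mul_le_of_le_inv_mul ha hS0.le hm1 hK hC₂ (Nat.cast_nonneg N)
        (D.theta_pos zero_le_one _).le (h₂ m hm1 _ hsep hcount) (hθS w)
    · refine mul_le_of_le_mul_of_mul_le ha hS0.le hm hK hL hgen ?_
      have h3 := theta_mul_le_absTheta hsep hcount
      rw [absTheta_weyl, ← theta_eq_absTheta hx] at h3
      have h4 : D.theta 1 x ≤ S / a := hθS 1
      have h5 : 0 ≤ S / a := by positivity
      linarith

lemma absRho_weyl (w : weylGroup D) (z : E) : D.absRho (w.1 z) = D.absRho z :=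
  weyl_invariant D D.absRho (fun _ hα z => D.absRho_rRefl hα z) w z

lemma absRho_of_posChamber {x : E} (hx : x ∈ posChamber D) : D.absRho x = ⟪rhoHO D, x⟫ := by
  rw [D.absRho_eq, D.inner_rhoHO]
  exact Finset.sum_congr rfl fun α hα => by rw [abs_of_pos (hx α hα)]

variable [Fintype (weylGroup D)] {G : E → ℝ}

lemma contDiff_Fsym (hG : IsOpdamR D 0 G) : ContDiff ℝ 1 (Fsym D G) := by
  have h : ContDiff ℝ 1 G := contDiffOn_univ.1 (hG.1.contDiffOn uniqueDiffOn_univ)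
  exact contDiff_const.mul
    (ContDiff.sum fun w _ => h.comp (w.1.toContinuousLinearEquiv.contDiff))

lemma sum_rescaled_eq (x : E) : ∑ w : weylGroup D, D.rescaled G (w.1 x) =
    Fintype.card (weylGroup D) * (Real.exp (D.absRho x) * Fsym D G x) := by
  have h : (Fintype.card (weylGroup D) : ℝ) ≠ 0 := Nat.cast_ne_zero.2 Fintype.card_ne_zero
  simp only [rescaled, absRho_weyl, ← Finset.mul_sum, Fsym]
  field_simp

lemma sum_radialOp_eq (hG : IsOpdamR D 0 G) {x : E} (hx : x ∈ posChamber D) :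
    ∑ w : weylGroup D, D.radialOp (D.rescaled G) (w.1 x) =
      Fintype.card (weylGroup D) * (Real.exp (D.absRho x) *
        (⟪rhoHO D, x⟫ * Fsym D G x + ⟪x, gradient (Fsym D G) x⟫)) := by
  have h1 : HasDerivAt (fun t : ℝ => ∑ w : weylGroup D, D.rescaled G (w.1 (t • x)))
      (∑ w : weylGroup D, D.radialOp (D.rescaled G) (w.1 x)) 1 := by
    refine HasDerivAt.fun_sum fun w _ => ?_
    have := D.hasRadialDerivAt_rescaled hG (D.regular_weyl w (regular_of_posChamber hx))
    simpa only [HasRadialDerivAt, map_smul] using this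
  have h2 : HasDerivAt (fun t : ℝ => D.absRho (t • x)) (D.absRho x) 1 :=
    hasRadialDerivAt_of_homogeneous fun t ht => D.absRho_smul ht x
  have h3 : HasDerivAt (fun t : ℝ => Fsym D G (t • x)) (fderiv ℝ (Fsym D G) x x) 1 := by
    have hF : HasFDerivAt (Fsym D G) (fderiv ℝ (Fsym D G) x) ((1 : ℝ) • x) := by
      rw [one_smul]
      exact ((contDiff_Fsym hG).differentiable one_ne_zero x).hasFDerivAt
    have hs : HasDerivAt (fun t : ℝ => t • x) ((1 : ℝ) • x) 1 := (hasDerivAt_id 1).smul_const x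
    have hc := hF.comp_hasDerivAt 1 hs
    rw [one_smul] at hc
    exact hc
  have h4 := (h2.exp.mul h3).const_mul (Fintype.card (weylGroup D) : ℝ)
  simp only [sum_rescaled_eq] at h1
  have h5 : ⟪x, gradient (Fsym D G) x⟫ = fderiv ℝ (Fsym D G) x x := by
    rw [real_inner_comm, inner_gradient_left]
  rw [h1.unique h4, h5, one_smul, absRho_of_posChamber hx]
  ring

lemma exists_bound_on_posChamber (hG : IsOpdamR D 0 G) :
    ∃ C : ℝ, 0 ≤ C ∧ ∀ x ∈ posChamber D, ∀ m : ℝ, 0 ≤ m → (∀ α ∈ D.Rpos, m ≤ ⟪α, x⟫) →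
      |⟪rhoHO D, x⟫ + ⟪x, gradient (Fsym D G) x⟫ / Fsym D G x - ((Rpos0 D).card : ℝ)| ≤
        C / (1 + m) := by
  obtain ⟨A, hA, hup⟩ := exists_rescaled_le hG
  obtain ⟨a, ha, hlow⟩ := exists_le_rescaled hG
  obtain ⟨C, hC, hterm⟩ := exists_abs_term_le ha hA.le hlow hup
    fun z hz => D.hasRadialDerivAt_rescaled hG hz
  refine ⟨Fintype.card (weylGroup D) * C, by positivity, fun x hx m hm hmx => ?_⟩
  set S := ∑ w : weylGroup D, D.rescaled G (w.1 x) with hS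
  have hS0 : 0 < S := Finset.sum_pos (fun w _ =>
    (mul_pos ha (D.theta_pos zero_le_one _)).trans_le
      (hlow _ (D.regular_weyl w (regular_of_posChamber hx)))) Finset.univ_nonempty
  have hW : (0 : ℝ) < Fintype.card (weylGroup D) := Nat.cast_pos.2 Fintype.card_pos
  have hSF := sum_rescaled_eq (D := D) (G := G) x
  have hF : Fsym D G x ≠ 0 := fun h => by
    rw [h, mul_zero, mul_zero, ← hS] at hSF
    exact hS0.ne' hSF
  have e : ⟪rhoHO D, x⟫ + ⟪x, gradient (Fsym D G) x⟫ / Fsym D G x - ((Rpos0 D).card : ℝ) =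
      (∑ w : weylGroup D, (D.radialOp (D.rescaled G) (w.1 x) -
        (Rpos0 D).card * D.rescaled G (w.1 x))) / S := by
    rw [Finset.sum_sub_distrib, ← Finset.mul_sum, ← hS, sum_radialOp_eq hG hx, sub_div,
      mul_div_assoc _ S, div_self hS0.ne', mul_one, hS, hSF]
    have := Real.exp_pos (D.absRho x)
    field_simp
  rw [e, abs_div, abs_of_pos hS0, div_le_iff₀ hS0]
  refine (Finset.abs_sum_le_sum_abs _ _).trans ?_
  refine (Finset.sum_le_sum fun w _ => hterm x hx m hm hmx w).trans ?_
  rw [Finset.sum_const, Finset.card_univ, nsmul_eq_mul]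
  apply le_of_eq
  ring

lemma Fsym_pos_of_mem_closure (hG : IsOpdamR D 0 G) {x : E}
    (hx : x ∈ closure (posChamber D)) : 0 < Fsym D G x := by
  obtain ⟨a, ha, hlow⟩ := exists_le_rescaled hG
  have hW : (0 : ℝ) < Fintype.card (weylGroup D) := Nat.cast_pos.2 Fintype.card_pos
  have hcont : Continuous fun y =>
      Fintype.card (weylGroup D) * (Real.exp (D.absRho y) * Fsym D G y) :=
    continuous_const.mul ((Real.continuous_exp.comp D.continuous_absRho).mul
      (contDiff_Fsym hG).continuous)
  have h : a ≤ Fintype.card (weylGroup D) * (Real.exp (D.absRho x) * Fsym D G x) := by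
    refine ContinuousWithinAt.closure_le hx continuousWithinAt_const
      hcont.continuousWithinAt fun y hy => ?_
    rw [← sum_rescaled_eq]
    have hle : ∀ w : weylGroup D, a ≤ D.rescaled G (w.1 y) := fun w =>
      (le_mul_of_one_le_right ha.le (one_le_theta _)).trans
        (hlow _ (D.regular_weyl w (regular_of_posChamber hy)))
    exact (hle 1).trans (Finset.single_le_sum (f := fun w : weylGroup D => D.rescaled G (w.1 y))
      (fun w _ => ha.le.trans (hle w)) (Finset.mem_univ 1))
  have h1 := pos_of_mul_pos_right (ha.trans_le h) hW.le
  exact pos_of_mul_pos_right h1 (Real.exp_pos _).le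

end HOData

/-- there is `C > 0` with
`|(ρ,x) + (x,∇F₀(x))/F₀(x) - |R₀⁺|| ≤ C / (1 + min_{α ∈ R⁺} (α,x))` on `ā₊`. -/
theorem statement9 (D : HOData E) [Fintype (weylGroup D)] (hne : D.Rpos.Nonempty)
    (Gzero : E → ℝ) (hG0 : IsOpdamR D 0 Gzero) :
    ∃ C : ℝ, 0 < C ∧ ∀ x ∈ closure (posChamber D),
      |⟪rhoHO D, x⟫ + ⟪x, gradient (Fsym D Gzero) x⟫ / Fsym D Gzero x
          - ((Rpos0 D).card : ℝ)|
        ≤ C / (1 + D.Rpos.inf' hne (fun α => ⟪α, x⟫)) := by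
  obtain ⟨C, hC, hbound⟩ := HOData.exists_bound_on_posChamber hG0
  refine ⟨C + 1, by positivity, fun x hx => ?_⟩
  have hF := HOData.Fsym_pos_of_mem_closure hG0 hx
  have hsmooth := HOData.contDiff_Fsym hG0
  have hinf : Continuous fun y : E => D.Rpos.inf' hne (fun α => ⟪α, y⟫) :=
    Continuous.finset_inf'_apply hne fun α _ => by fun_prop
  have hinf0 : 0 ≤ D.Rpos.inf' hne (fun α => ⟪α, x⟫) :=
    ContinuousWithinAt.closure_le hx continuousWithinAt_const hinf.continuousWithinAt
      fun y hy => Finset.le_inf' hne _ fun α hα => (hy α hα).le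
  have hgrad : Continuous fun y : E => ⟪y, gradient (Fsym D Gzero) y⟫ := by
    have : (fun y : E => ⟪y, gradient (Fsym D Gzero) y⟫) =
        fun y => fderiv ℝ (Fsym D Gzero) y y := by
      funext y
      rw [real_inner_comm, inner_gradient_left]
    rw [this]
    exact (hsmooth.continuous_fderiv one_ne_zero).clm_apply continuous_id
  have hlhs : ContinuousAt (fun y : E => |⟪rhoHO D, y⟫ +
      ⟪y, gradient (Fsym D Gzero) y⟫ / Fsym D Gzero y - ((Rpos0 D).card : ℝ)|) x :=
    (((by fun_prop : Continuous fun y : E => ⟪rhoHO D, y⟫).continuousAt.add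
      (hgrad.continuousAt.div hsmooth.continuous.continuousAt hF.ne')).sub
        continuousAt_const).abs
  have hrhs : ContinuousAt
      (fun y : E => (C + 1) / (1 + D.Rpos.inf' hne (fun α => ⟪α, y⟫))) x :=
    continuousAt_const.div (continuousAt_const.add hinf.continuousAt) (by positivity)
  refine ContinuousWithinAt.closure_le hx hlhs.continuousWithinAt hrhs.continuousWithinAt
    fun y hy => ?_
  have hy0 : 0 ≤ D.Rpos.inf' hne (fun α => ⟪α, y⟫) :=
    Finset.le_inf' hne _ fun α hα => (hy α hα).le
  refine (hbound y hy _ hy0 fun α hα => Finset.inf'_le _ hα).trans ?_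
  gcongr
  linarith
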